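/- arXiv:0707.1475 — 2 statements merged into one kernel-verified Lean document; each statement's English description precedes it below -/
import Mathlib

section
/- Let C_{abcd} have Weyl symmetries on Minkowski space and n^a be a unit timelike vector. Define the electric and magnetic parts E_{ac} = C_{abcd} n^b n^d and B_{ac} = *C_{abcd} n^b n^d. Then E_{ab} and B_{ab} are symmetric, trace-free (E^a{}_a = B^a{}_a = 0), spatial with respect to n^a, and the orthogonal splitting of the Weyl tensor holds: C_{abcd} = 2 n_c n_{[a} E_{b]d} − 2 h_{a[d} E_{c]b} + 2 n_d n_{[b} E_{a]c} + 2 n_{[d} B^e{}_{c]} ε_{abe} + 2 n_{[b} B^e{}_{a]} ε_{cde} + 2 h_{b[d} E_{c]a}. -/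
noncomputable section

/-- The Minkowski metric `diag(-1,1,1,1)` on `ℝ⁴`. -/
def gm : Fin 4 → Fin 4 → ℝ := fun a b => if a = b then (if a = 0 then -1 else 1) else 0

/-- The totally antisymmetric volume form with `η₀₁₂₃ = 1`. -/
def eta (a b c d : Fin 4) : ℝ :=
  ((((b.val : ℤ) - a.val).sign * ((c.val : ℤ) - a.val).sign * ((d.val : ℤ) - a.val).sign *
    ((c.val : ℤ) - b.val).sign * ((d.val : ℤ) - b.val).sign * ((d.val : ℤ) - c.val).sign : ℤ) : ℝ)

/-- Index lowering: `n_a = g_{ab} n^b`. -/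
def lo (n : Fin 4 → ℝ) (a : Fin 4) : ℝ := ∑ b, gm a b * n b

/-- Spatial metric `h_{ab} = g_{ab} + n_a n_b`. -/
def hm (n : Fin 4 → ℝ) (a b : Fin 4) : ℝ := gm a b + lo n a * lo n b

/-- Spatial volume form `ε_{abc} = n^d η_{dabc}` of a unit timelike `n`. -/
def eps (n : Fin 4 → ℝ) (a b c : Fin 4) : ℝ := ∑ d, n d * eta d a b c

/-- A rank-4 tensor. -/
abbrev Tensor4 := Fin 4 → Fin 4 → Fin 4 → Fin 4 → ℝ

/-- `C_{abcd}` has the symmetries of a Weyl tensor. -/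
structure WeylSymm (C : Tensor4) : Prop where
  antisymm₁ : ∀ a b c d, C a b c d = - C b a c d
  antisymm₂ : ∀ a b c d, C a b c d = - C a b d c
  pairSymm : ∀ a b c d, C a b c d = C c d a b
  firstBianchi : ∀ a b c d,
    (1/6 : ℝ) * (C a b c d + C b c a d + C c a b d
      - C b a c d - C a c b d - C c b a d) = 0
  traceFree : ∀ b d, (∑ a, ∑ c, gm a c * C a b c d) = 0

/-- Left dual `*C_{abcd} = ½ η_{abpq} C^{pq}{}_{cd}`. -/
def dualL (C : Tensor4) (a b c d : Fin 4) : ℝ :=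
  (1/2) * ∑ p, ∑ q, eta a b p q * (∑ r, ∑ s, gm p r * gm q s * C r s c d)

/-- Electric part of the Weyl tensor `E_{ac} = C_{abcd} n^b n^d`. -/
def EW (C : Tensor4) (n : Fin 4 → ℝ) (a c : Fin 4) : ℝ := ∑ b, ∑ d, C a b c d * n b * n d

/-- Magnetic part of the Weyl tensor `B_{ac} = *C_{abcd} n^b n^d`. -/
def BW (C : Tensor4) (n : Fin 4 → ℝ) (a c : Fin 4) : ℝ := ∑ b, ∑ d, dualL C a b c d * n b * n d

/-! The dual of a Weyl tensor is again a Weyl tensor: antisymmetrizing over five indices in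
dimension four gives zero, and this turns the tracefreeness of `C` into the cyclic identity for
`*C`, and the cyclic identity for `C` into the tracefreeness of `*C`. Since `B` is the electric
part of `*C`, its algebraic properties are those of `E`.

A 2-form `F` is determined by its electric and magnetic parts `F_{ab} n^b` and `*F_{ab} n^b`.
Applying this decomposition to both index pairs of `C`, and using that left and right duals
coincide and that `**C = -C`, expresses `C` through `E` and `B` with one term containing two
copies of `ε`. The Gram determinant identity for `ε_{abc} ε_{def}` turns that term into the ones
with `h` and `E`. -/

lemma gm_comm (a b : Fin 4) : gm a b = gm b a := by
  by_cases h : a = b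
  · rw [h]
  · simp [gm, h, Ne.symm h]

lemma sum_gm_mul (a : Fin 4) (f : Fin 4 → ℝ) : ∑ b, gm a b * f b = gm a a * f a :=
  Finset.sum_eq_single a (fun b _ hb => by simp [gm, hb.symm]) (by simp)

lemma gm_self_mul_self (a : Fin 4) : gm a a * gm a a = 1 := by
  fin_cases a <;> simp [gm]

lemma det_gm : Matrix.det (Matrix.of gm) = -1 := by
  have h : Matrix.of gm = Matrix.diagonal ![-1, 1, 1, 1] := by
    ext a b
    fin_cases a <;> fin_cases b <;> simp [gm]
  simp [h, Fin.prod_univ_four]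

lemma lo_apply (n : Fin 4 → ℝ) (a : Fin 4) : lo n a = gm a a * n a :=
  sum_gm_mul a n

lemma hm_comm (n : Fin 4 → ℝ) (a b : Fin 4) : hm n a b = hm n b a := by
  rw [hm, hm, gm_comm, mul_comm]

lemma sum_hm_mul {n v : Fin 4 → ℝ} (hv : ∑ e, v e * n e = 0) (a : Fin 4) :
    ∑ e, gm e e * hm n a e * v e = v a := by
  have hterm (e) : gm e e * hm n a e * v e =
      gm a e * (gm e e * v e) + lo n a * (v e * n e) := by
    rw [hm]
    linear_combination gm e e * lo n a * v e * lo_apply n e +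
      lo n a * v e * n e * gm_self_mul_self e
  simp only [hterm, Finset.sum_add_distrib, ← Finset.mul_sum, hv, sum_gm_mul]
  linear_combination v a * gm_self_mul_self a

lemma eta_swap_left (a b c d : Fin 4) : eta a b c d = -eta b a c d := by
  unfold eta
  rw [← neg_sub (a.val : ℤ) b.val, Int.sign_neg]
  push_cast
  ring

lemma eta_eq_det (a b c d : Fin 4) :
    eta a b c d =
      Matrix.det (Matrix.of ![Pi.single a 1, Pi.single b 1, Pi.single c 1, Pi.single d 1]) := by
  have hint : ∀ a b c d : Fin 4,
      ((b.val : ℤ) - a.val).sign * ((c.val : ℤ) - a.val).sign * ((d.val : ℤ) - a.val).sign *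
        ((c.val : ℤ) - b.val).sign * ((d.val : ℤ) - b.val).sign * ((d.val : ℤ) - c.val).sign =
      Matrix.det (Matrix.of fun i j => if j = ![a, b, c, d] i then (1 : ℤ) else 0) := by
    decide +kernel
  rw [eta, hint, Int.cast_det]
  congr 1
  ext i j
  fin_cases i <;> exact (Int.cast_ite _ _ _).trans (by simp [Pi.single_apply])

lemma eps_eq_det (n : Fin 4 → ℝ) (a b c : Fin 4) :
    eps n a b c = Matrix.det (Matrix.of ![n, Pi.single a 1, Pi.single b 1, Pi.single c 1]) := by
  simp [eps, eta_eq_det, Matrix.det_succ_row_zero (n := 3), Matrix.det_fin_three,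
    Fin.sum_univ_four, Fin.succAbove]
  ring

lemma gram_matrix_eq {n : Fin 4 → ℝ} (hn : ∑ a, ∑ b, gm a b * n a * n b = -1)
    (a b c d e f : Fin 4) :
    Matrix.of ![n, Pi.single a 1, Pi.single b 1, Pi.single c 1] * Matrix.of gm *
      (Matrix.of ![n, Pi.single d 1, Pi.single e 1, Pi.single f 1]).transpose =
      !![-1, lo n d, lo n e, lo n f; lo n a, gm a d, gm a e, gm a f;
        lo n b, gm b d, gm b e, gm b f; lo n c, gm c d, gm c e, gm c f] := by
  have hvec : Matrix.vecMul n (Matrix.of gm) = lo n := by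
    ext j
    simp [Matrix.vecMul, dotProduct, lo, gm_comm, mul_comm]
  have hnn : ∑ a, lo n a * n a = -1 := by
    simpa [lo, Finset.sum_mul, mul_right_comm] using hn
  ext i j
  fin_cases i <;> fin_cases j <;> simp [Matrix.mul_apply, hvec, hnn, Pi.single_apply] <;> rfl

lemma eps_mul_eps {n : Fin 4 → ℝ} (hn : ∑ a, ∑ b, gm a b * n a * n b = -1) (a b c d e f : Fin 4) :
    eps n a b c * eps n d e f = Matrix.det !![hm n a d, hm n a e, hm n a f;
      hm n b d, hm n b e, hm n b f; hm n c d, hm n c e, hm n c f] := by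
  have hgram := congrArg Matrix.det (gram_matrix_eq hn a b c d e f)
  rw [Matrix.det_mul, Matrix.det_mul, Matrix.det_transpose, det_gm, ← eps_eq_det,
    ← eps_eq_det] at hgram
  -- `h` is the Schur complement of the corner entry `g(n, n) = -1` of the Gram matrix.
  have hschur : Matrix.det !![-1, lo n d, lo n e, lo n f; lo n a, gm a d, gm a e, gm a f;
      lo n b, gm b d, gm b e, gm b f; lo n c, gm c d, gm c e, gm c f] =
      -Matrix.det !![hm n a d, hm n a e, hm n a f; hm n b d, hm n b e, hm n b f;
        hm n c d, hm n c e, hm n c f] := by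
    simp [Matrix.det_succ_row_zero, Fin.sum_univ_succ, Fin.succAbove, hm]
    ring
  linear_combination -hgram - hschur

lemma sum_eps_mul_eps {n : Fin 4 → ℝ} (hn : ∑ a, ∑ b, gm a b * n a * n b = -1)
    {S : Fin 4 → Fin 4 → ℝ} (htr : ∑ e, gm e e * S e e = 0)
    (hleft : ∀ f, ∑ e, S e f * n e = 0) (hright : ∀ e, ∑ f, S e f * n f = 0) (a b c d : Fin 4) :
    ∑ e, ∑ f, gm e e * gm f f * S e f * (eps n a b e * eps n c d f) =
      hm n a d * S c b - hm n a c * S d b + hm n b c * S d a - hm n b d * S c a := by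
  have hproj (x y) : ∑ e, ∑ f, gm e e * gm f f * S e f * (hm n x e * hm n y f) = S x y := by
    rw [← sum_hm_mul (hright x) y]
    simp only [← sum_hm_mul (hleft _) x, Finset.mul_sum]
    rw [Finset.sum_comm]
    refine Finset.sum_congr rfl fun f _ => Finset.sum_congr rfl fun e _ => ?_
    ring
  have hcontr : ∑ e, ∑ f, gm e e * gm f f * S e f * hm n e f = 0 := by
    rw [← htr]
    refine Finset.sum_congr rfl fun e _ => ?_
    rw [← sum_hm_mul (hright e) e, Finset.mul_sum]
    refine Finset.sum_congr rfl fun f _ => ?_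
    ring
  have hterm (e f) : gm e e * gm f f * S e f * (eps n a b e * eps n c d f) =
      (hm n a c * hm n b d - hm n a d * hm n b c) * (gm e e * gm f f * S e f * hm n e f)
      - hm n a c * (gm e e * gm f f * S e f * (hm n d e * hm n b f))
      + hm n a d * (gm e e * gm f f * S e f * (hm n c e * hm n b f))
      + hm n b c * (gm e e * gm f f * S e f * (hm n d e * hm n a f))
      - hm n b d * (gm e e * gm f f * S e f * (hm n c e * hm n a f)) := by
    rw [eps_mul_eps hn, Matrix.det_fin_three]
    simp [hm_comm n e]
    ring
  simp only [hterm, Finset.sum_add_distrib, Finset.sum_sub_distrib, ← Finset.mul_sum, hproj, hcontr]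
  ring

/-- The Hodge dual `*F_{ab} = ½ η_{abpq} F^{pq}` of a 2-form, written so that `dualL C` is by
definition the Hodge dual of `C` in its first index pair. -/
def hodge (F : Fin 4 → Fin 4 → ℝ) (a b : Fin 4) : ℝ :=
  (1 / 2) * ∑ p, ∑ q, eta a b p q * (∑ r, ∑ s, gm p r * gm q s * F r s)

lemma hodge_apply (F : Fin 4 → Fin 4 → ℝ) (a b : Fin 4) :
    hodge F a b = (1 / 2) * ∑ p, ∑ q, eta a b p q * (gm p p * (gm q q * F p q)) := by
  simp only [hodge, mul_assoc, ← Finset.mul_sum, sum_gm_mul]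

lemma hodge_sum_mul (F : Fin 4 → Fin 4 → Fin 4 → ℝ) (n : Fin 4 → ℝ) (a b : Fin 4) :
    hodge (fun p q => ∑ k, F k p q * n k) a b = ∑ k, hodge (F k) a b * n k := by
  simp only [hodge_apply, Fin.sum_univ_four]
  ring

lemma hodge_antisymm (F : Fin 4 → Fin 4 → ℝ) (a b : Fin 4) : hodge F a b = -hodge F b a := by
  simp only [hodge, eta_swap_left a b, neg_mul, Finset.sum_neg_distrib, mul_neg]

lemma hodge_eq_matrix {F : Fin 4 → Fin 4 → ℝ} (hF : ∀ a b, F a b = -F b a) :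
    hodge F = !![0, F 2 3, -F 1 3, F 1 2;
      -F 2 3, 0, -F 0 3, F 0 2;
      F 1 3, F 0 3, 0, -F 0 1;
      -F 1 2, -F 0 2, F 0 1, 0] := by
  ext a b
  rw [hodge_apply]
  fin_cases a <;> fin_cases b <;>
    simp [Fin.sum_univ_four, eta, gm, Int.sign_eq_one_of_pos] <;>
    linarith [hF 0 1, hF 0 2, hF 0 3, hF 1 2, hF 1 3, hF 2 3]

lemma hodge_hodge {F : Fin 4 → Fin 4 → ℝ} (hF : ∀ a b, F a b = -F b a) (a b : Fin 4) :
    hodge (hodge F) a b = -F a b := by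
  have h := hF a b
  rw [hodge_eq_matrix (hodge_antisymm F), hodge_eq_matrix hF]
  fin_cases a <;> fin_cases b <;> simp at h ⊢ <;> linarith

lemma hodge_cyclic_of_trace_eq_zero {T : Fin 4 → Fin 4 → Fin 4 → ℝ}
    (hT : ∀ a b c, T a b c = -T b a c) (htr : ∀ b, ∑ a, gm a a * T a b a = 0) (a b c : Fin 4) :
    hodge (T · · c) a b + hodge (T · · a) b c + hodge (T · · b) c a = 0 := by
  have hdiag (a c) : T a a c = 0 := by linarith [hT a a c]
  have h0 := htr 0
  have h1 := htr 1
  have h2 := htr 2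
  have h3 := htr 3
  simp [Fin.sum_univ_four, gm, hdiag, hT 1 0, hT 2 0, hT 3 0, hT 2 1, hT 3 1, hT 3 2]
    at h0 h1 h2 h3
  simp only [hodge_eq_matrix (hT · · _)]
  fin_cases a <;> fin_cases b <;> fin_cases c <;> simp <;> linarith only [h0, h1, h2, h3]

lemma trace_hodge_eq_zero_of_cyclic {T : Fin 4 → Fin 4 → Fin 4 → ℝ}
    (hcyc : ∀ a b c, T a b c + T b c a + T c a b = 0) (b : Fin 4) :
    ∑ a, gm a a * hodge (T · · a) a b = 0 := by
  simp only [hodge_apply]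
  fin_cases b <;> simp [Fin.sum_univ_four, eta, gm, Int.sign_eq_one_of_pos] <;>
    linarith [hcyc 0 1 2, hcyc 0 1 3, hcyc 0 2 3, hcyc 1 2 3, hcyc 0 2 1, hcyc 0 3 1, hcyc 0 3 2,
      hcyc 1 3 2]

lemma two_form_eq_electric_magnetic {F : Fin 4 → Fin 4 → ℝ} (hF : ∀ a b, F a b = -F b a)
    {n : Fin 4 → ℝ} (hn : ∑ a, ∑ b, gm a b * n a * n b = -1) (a b : Fin 4) :
    F a b = lo n a * ∑ c, F b c * n c - lo n b * ∑ c, F a c * n c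
      - ∑ e, gm e e * (∑ c, hodge F e c * n c) * eps n a b e := by
  have hdiag (a) : F a a = 0 := by linarith [hF a a]
  have hhomogeneous : (∑ a, ∑ b, gm a b * n a * n b) * F a b =
      lo n b * ∑ c, F a c * n c - lo n a * ∑ c, F b c * n c
      + ∑ e, gm e e * (∑ c, hodge F e c * n c) * eps n a b e := by
    simp only [hodge_eq_matrix hF, mul_assoc, Fin.sum_univ_four, lo_apply, eps]
    fin_cases a <;> fin_cases b <;>
      simp [hdiag, hF 1 0, hF 2 0, hF 3 0, hF 2 1, hF 3 1, hF 3 2, gm, eta,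
        Int.sign_eq_one_of_pos] <;>
      ring
  linear_combination F a b * hn - hhomogeneous

lemma pair_symm_of_cyclic {ι : Type*} {T : ι → ι → ι → ι → ℝ}
    (h₁ : ∀ a b c d, T a b c d = -T b a c d) (h₂ : ∀ a b c d, T a b c d = -T a b d c)
    (hcyc : ∀ a b c d, T a b c d + T b c a d + T c a b d = 0) (a b c d : ι) :
    T a b c d = T c d a b := by
  linarith [hcyc a b c d, hcyc b c d a, hcyc c d a b, hcyc d a b c, h₂ a b d c, h₂ b c d a,
    h₂ c d b a, h₂ d a c b, h₂ b d a c, h₁ d b c a, h₁ a c d b, h₂ c a d b]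

namespace WeylSymm

variable {C : Tensor4}

lemma cyclic (hC : WeylSymm C) (a b c d : Fin 4) : C a b c d + C b c a d + C c a b d = 0 := by
  linarith [hC.firstBianchi a b c d, hC.antisymm₁ a b c d, hC.antisymm₁ b c a d,
    hC.antisymm₁ c a b d]

lemma sum_gm_mul_eq_zero (hC : WeylSymm C) (b d : Fin 4) : ∑ a, gm a a * C a b a d = 0 := by
  simpa only [sum_gm_mul _ (C _ b · d)] using hC.traceFree b d

theorem dual (hC : WeylSymm C) : WeylSymm (dualL C) := by
  have h₁ (a b c d) : dualL C a b c d = -dualL C b a c d := hodge_antisymm (C · · c d) a b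
  have h₂ (a b c d) : dualL C a b c d = -dualL C a b d c := by
    simp only [dualL, hC.antisymm₂ _ _ c d, mul_neg, Finset.sum_neg_distrib]
  have hcyc (a b c d) : dualL C a b c d + dualL C b c a d + dualL C c a b d = 0 :=
    hodge_cyclic_of_trace_eq_zero (T := (C · · · d)) (hC.antisymm₁ · · · d)
      (hC.sum_gm_mul_eq_zero · d) a b c
  have htr (b d) : ∑ a, gm a a * dualL C a b a d = 0 :=
    trace_hodge_eq_zero_of_cyclic (T := (C · · · d)) (hC.cyclic · · · d) b
  exact {
    antisymm₁ := h₁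
    antisymm₂ := h₂
    pairSymm := pair_symm_of_cyclic h₁ h₂ hcyc
    firstBianchi a b c d := by linarith [hcyc a b c d, hcyc b a c d]
    traceFree b d := by simpa only [sum_gm_mul _ (dualL C _ b · d)] using htr b d }

lemma dualL_dualL (hC : WeylSymm C) (a b c d : Fin 4) : dualL (dualL C) a b c d = -C a b c d :=
  hodge_hodge (hC.antisymm₁ · · c d) a b

lemma hodge_right_eq_dualL (hC : WeylSymm C) (a b c d : Fin 4) :
    hodge (C a b) c d = dualL C a b c d := by
  rw [hC.dual.pairSymm a b c d, funext₂ (hC.pairSymm a b)]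
  rfl

lemma EW_symm (hC : WeylSymm C) (n : Fin 4 → ℝ) (a b : Fin 4) : EW C n a b = EW C n b a := by
  unfold EW
  rw [Finset.sum_comm]
  refine Finset.sum_congr rfl fun p _ => Finset.sum_congr rfl fun q _ => ?_
  rw [hC.pairSymm a q b p]
  ring

lemma sum_EW_mul_right (hC : WeylSymm C) (n : Fin 4 → ℝ) (a : Fin 4) :
    ∑ c, EW C n a c * n c = 0 := by
  have hantisymm (b) : ∑ d, ∑ c, C a b c d * n d * n c = 0 := by
    have hneg : ∑ d, ∑ c, C a b c d * n d * n c = -∑ d, ∑ c, C a b c d * n d * n c := by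
      conv_lhs => rw [Finset.sum_comm]
      simp only [← Finset.sum_neg_distrib]
      refine Finset.sum_congr rfl fun d _ => Finset.sum_congr rfl fun c _ => ?_
      rw [hC.antisymm₂ a b d c]
      ring
    linarith
  calc ∑ c, EW C n a c * n c = ∑ b, (∑ d, ∑ c, C a b c d * n d * n c) * n b := by
        simp only [EW, Fin.sum_univ_four]
        ring
    _ = 0 := by simp only [hantisymm, zero_mul, Finset.sum_const_zero]

lemma sum_EW_mul_left (hC : WeylSymm C) (n : Fin 4 → ℝ) (c : Fin 4) :
    ∑ a, EW C n a c * n a = 0 := by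
  simpa only [hC.EW_symm n c] using hC.sum_EW_mul_right n c

lemma trace_EW (hC : WeylSymm C) (n : Fin 4 → ℝ) : ∑ a, ∑ c, gm a c * EW C n a c = 0 := by
  calc ∑ a, ∑ c, gm a c * EW C n a c =
        ∑ b, ∑ d, (∑ a, ∑ c, gm a c * C a b c d) * n b * n d := by
        simp only [EW, Fin.sum_univ_four]
        ring
    _ = 0 := by simp only [hC.traceFree, zero_mul, Finset.sum_const_zero]

lemma BW_symm (hC : WeylSymm C) (n : Fin 4 → ℝ) (a b : Fin 4) : BW C n a b = BW C n b a :=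
  hC.dual.EW_symm n a b

lemma BW_dualL (hC : WeylSymm C) (n : Fin 4 → ℝ) (a b : Fin 4) :
    BW (dualL C) n a b = -EW C n a b := by
  simp only [BW, EW, hC.dualL_dualL, neg_mul, Finset.sum_neg_distrib]

lemma contract_eq_electric_magnetic (hC : WeylSymm C) {n : Fin 4 → ℝ}
    (hn : ∑ a, ∑ b, gm a b * n a * n b = -1) (b c d : Fin 4) :
    ∑ q, C b q c d * n q = lo n c * EW C n b d - lo n d * EW C n b c
      - ∑ f, gm f f * BW C n b f * eps n c d f := by
  have hF := two_form_eq_electric_magnetic (F := fun c d => ∑ q, C b q c d * n q)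
    (fun c d => by simp only [hC.antisymm₂ b _ c d, neg_mul, Finset.sum_neg_distrib]) hn c d
  have hE (x) : ∑ y, (∑ q, C b q x y * n q) * n y = EW C n b x := by
    simp only [EW, Finset.sum_mul]
    exact Finset.sum_comm
  have hB (x) : ∑ y, (∑ q, dualL C b q x y * n q) * n y = BW C n b x := by
    simp only [BW, Finset.sum_mul]
    exact Finset.sum_comm
  simpa only [hodge_sum_mul, hC.hodge_right_eq_dualL, hE, hB] using hF

theorem eq_electric_magnetic (hC : WeylSymm C) {n : Fin 4 → ℝ}
    (hn : ∑ a, ∑ b, gm a b * n a * n b = -1) (a b c d : Fin 4) :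
    C a b c d =
      lo n a * (lo n c * EW C n b d - lo n d * EW C n b c)
      - lo n b * (lo n c * EW C n a d - lo n d * EW C n a c)
      + ∑ e, gm e e * (lo n d * BW C n e c - lo n c * BW C n e d) * eps n a b e
      + ∑ e, gm e e * (lo n b * BW C n e a - lo n a * BW C n e b) * eps n c d e
      - ∑ e, ∑ f, gm e e * gm f f * EW C n e f * (eps n a b e * eps n c d f) := by
  have hdual (e) : ∑ q, hodge (C · · c d) e q * n q = lo n c * BW C n e d - lo n d * BW C n e c
      + ∑ f, gm f f * EW C n e f * eps n c d f := by
    have h := hC.dual.contract_eq_electric_magnetic hn e c d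
    simp only [hC.BW_dualL, mul_neg, neg_mul, Finset.sum_neg_distrib, sub_neg_eq_add] at h
    exact h
  rw [two_form_eq_electric_magnetic (hC.antisymm₁ · · c d) hn a b,
    hC.contract_eq_electric_magnetic hn, hC.contract_eq_electric_magnetic hn]
  simp only [hdual, hC.BW_symm n a, hC.BW_symm n b, Fin.sum_univ_four]
  ring

end WeylSymm

lemma sum_sum_gm_mul_sub (u v : ℝ) (p q x : Fin 4 → ℝ) :
    ∑ e, ∑ f, (u * gm e f * p f - v * gm e f * q f) * x e =
      ∑ e, gm e e * (u * p e - v * q e) * x e := by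
  refine Finset.sum_congr rfl fun e _ => ?_
  rw [← sum_gm_mul e fun f => u * p f - v * q f, Finset.sum_mul]
  refine Finset.sum_congr rfl fun f _ => ?_
  ring

/-- The electric and magnetic parts of the Weyl tensor are symmetric, trace-free and
spatial, and the Weyl tensor admits the stated orthogonal splitting. -/
theorem weyl_orthogonal_splitting
    (C : Tensor4) (hC : WeylSymm C)
    (n : Fin 4 → ℝ) (hn : (∑ a, ∑ b, gm a b * n a * n b) = -1) :
    (∀ a b, EW C n a b = EW C n b a) ∧
    (∀ a b, BW C n a b = BW C n b a) ∧
    (∑ a, ∑ b, gm a b * EW C n a b) = 0 ∧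
    (∑ a, ∑ b, gm a b * BW C n a b) = 0 ∧
    (∀ b, (∑ a, EW C n a b * n a) = 0 ∧ (∑ a, EW C n b a * n a) = 0) ∧
    (∀ b, (∑ a, BW C n a b * n a) = 0 ∧ (∑ a, BW C n b a * n a) = 0) ∧
    (∀ a b c d : Fin 4,
      C a b c d =
        lo n c * (lo n a * EW C n b d - lo n b * EW C n a d)
        - (hm n a d * EW C n c b - hm n a c * EW C n d b)
        + lo n d * (lo n b * EW C n a c - lo n a * EW C n b c)
        + (∑ e, ∑ f, (lo n d * gm e f * BW C n f c - lo n c * gm e f * BW C n f d)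
            * eps n a b e)
        + (∑ e, ∑ f, (lo n b * gm e f * BW C n f a - lo n a * gm e f * BW C n f b)
            * eps n c d e)
        + (hm n b d * EW C n c a - hm n b c * EW C n d a)) := by
  have htr : ∑ e, gm e e * EW C n e e = 0 := by
    simpa only [sum_gm_mul] using hC.trace_EW n
  -- `BW C n` is by definition `EW (dualL C) n`.
  refine ⟨hC.EW_symm n, hC.BW_symm n, hC.trace_EW n, hC.dual.trace_EW n,
    fun b => ⟨hC.sum_EW_mul_left n b, hC.sum_EW_mul_right n b⟩,
    fun b => ⟨hC.dual.sum_EW_mul_left n b, hC.dual.sum_EW_mul_right n b⟩, fun a b c d => ?_⟩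
  rw [hC.eq_electric_magnetic hn, sum_sum_gm_mul_sub, sum_sum_gm_mul_sub,
    sum_eps_mul_eps hn htr (hC.sum_EW_mul_left n) (hC.sum_EW_mul_right n)]
  ring
end
end

section
/- Let C_{abcd} have Weyl symmetries on Minkowski space, n^a be a unit timelike vector, and define E_{ac} = C_{abcd} n^b n^d and B_{ac} = *C_{abcd} n^b n^d. Then the Bel-Robinson tensor T_{abcd} = C_a{}^p{}_d{}^f C_{bpcf} + C_a{}^p{}_c{}^f C_{bpdf} − ⅛ g_{ab} g_{cd} C_{pqrs} C^{pqrs} admits the orthogonal splitting T_{abcd} = W n_a n_b n_c n_d + 4 𝒫_{(a} n_b n_c n_{d)} + 6 t_{(ab} n_c n_{d)} + 4 Q_{(abc} n_{d)} + t_{abcd}, where W = E_{ab} E^{ab} + B_{ab} B^{ab}, 𝒫_a = 2 B_p{}^l E_{ql} ε_a{}^{pq}, t_{ab} = W h_{ab} − 2 (B_a{}^c B_{bc} + E_a{}^c E_{bc}), Q_{cdb} = h_{cd} 𝒫_b − 2 (B_{da} E_{cf} + B_{ca} E_{df}) ε_b{}^{af}, and t_{abcd} = 4 (B_{ab} B_{cd}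 + E_{ab} E_{cd}) − h_{cd} t_{ab} + 2 h_{b(d} t_{c)a} + 2 h_{a(d} t_{c)b} − h_{ab} t_{cd} + W (h_{ab} h_{cd} − 2 h_{a(c} h_{d)b}). -/
/-!
Both sides of the splitting are covariant under proper Lorentz transformations, and every unit
timelike vector is the image of the observer at rest under one of them, so it suffices to treat
`n = (1, 0, 0, 0)`. There `C` is encoded by two symmetric trace-free `3 × 3` matrices: `E` and `B`
give the components with an index `0`, and the spatial components follow from `E` because in
dimension three a Riemann-like tensor is determined by its Ricci tensor. By the symmetries of both
sides six blocks of components remain, and each is an identity between quadratic expressions in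
`E` and `B`.
-/

noncomputable section

/-- Full contraction `A_{pqrs} B^{pqrs}`. -/
def q4 (A B : Tensor4) : ℝ :=
  ∑ e, ∑ f, ∑ p, ∑ h, ∑ r, ∑ s, ∑ t, ∑ u,
    A e f p h * gm e r * gm f s * gm p t * gm h u * B r s t u

/-- The Bel-Robinson tensor
`T_{abcd} = C_a{}^p{}_d{}^f C_{bpcf} + C_a{}^p{}_c{}^f C_{bpdf} − ⅛ g_{ab} g_{cd} C_{pqrs} C^{pqrs}`. -/
def BR (C : Tensor4) (a b c d : Fin 4) : ℝ :=
  (∑ p, ∑ f, ∑ r, ∑ s, gm p r * gm f s * C a r d s * C b p c f)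
  + (∑ p, ∑ f, ∑ r, ∑ s, gm p r * gm f s * C a r c s * C b p d f)
  - (1/8) * gm a b * gm c d * q4 C C

/-- Superenergy density `W = E_{ab} E^{ab} + B_{ab} B^{ab}`. -/
def Wse (C : Tensor4) (n : Fin 4 → ℝ) : ℝ :=
  (∑ a, ∑ b, ∑ c, ∑ d, EW C n a b * gm a c * gm b d * EW C n c d)
  + (∑ a, ∑ b, ∑ c, ∑ d, BW C n a b * gm a c * gm b d * BW C n c d)

/-- Super-Poynting vector `𝒫_a = 2 B_p{}^l E_{ql} ε_a{}^{pq}`. -/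
def Pse (C : Tensor4) (n : Fin 4 → ℝ) (a : Fin 4) : ℝ :=
  2 * ∑ p, ∑ q, ∑ l, ∑ m, ∑ r, ∑ s,
    gm l m * BW C n p m * EW C n q l * gm p r * gm q s * eps n a r s

/-- `t_{ab} = W h_{ab} − 2 (B_a{}^c B_{bc} + E_a{}^c E_{bc})`. -/
def tse (C : Tensor4) (n : Fin 4 → ℝ) (a b : Fin 4) : ℝ :=
  Wse C n * hm n a b
    - 2 * (∑ c, ∑ d, gm c d * (BW C n a d * BW C n b c + EW C n a d * EW C n b c))

/-- `Q_{cdb} = h_{cd} 𝒫_b − 2 (B_{da} E_{cf} + B_{ca} E_{df}) ε_b{}^{af}`. -/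
def Qse (C : Tensor4) (n : Fin 4 → ℝ) (c d b : Fin 4) : ℝ :=
  hm n c d * Pse C n b
    - 2 * ∑ a, ∑ f, ∑ r, ∑ s,
        (BW C n d a * EW C n c f + BW C n c a * EW C n d f) * gm a r * gm f s * eps n b r s

/-- The fully spatial part `t_{abcd}` of the Bel-Robinson tensor. -/
def tse4 (C : Tensor4) (n : Fin 4 → ℝ) (a b c d : Fin 4) : ℝ :=
  4 * (BW C n a b * BW C n c d + EW C n a b * EW C n c d)
  - hm n c d * tse C n a b
  + (hm n b d * tse C n c a + hm n b c * tse C n d a)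
  + (hm n a d * tse C n c b + hm n a c * tse C n d b)
  - hm n a b * tse C n c d
  + Wse C n * (hm n a b * hm n c d - (hm n a c * hm n d b + hm n a d * hm n c b))

/-- Total symmetrization of a rank-4 tensor. -/
def sym4 (T : Tensor4) (a b c d : Fin 4) : ℝ :=
  (1/24) * ∑ σ : Equiv.Perm (Fin 4),
    T (![a, b, c, d] (σ 0)) (![a, b, c, d] (σ 1)) (![a, b, c, d] (σ 2)) (![a, b, c, d] (σ 3))

namespace BelRobinson

open Matrix

section Contraction

/-- The diagonal of the Minkowski metric. -/
def signature : Fin 4 → ℝ := ![-1, 1, 1, 1]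

/-- The contraction `x_a y^a` of two covectors. -/
def dot₁ (x y : Fin 4 → ℝ) : ℝ := ∑ a, signature a * (x a * y a)

/-- The contraction `X_{ab} Y^{ab}` of two covariant tensors of rank 2. -/
def dot₂ (X Y : Fin 4 → Fin 4 → ℝ) : ℝ := ∑ a, signature a * dot₁ (X a) (Y a)

/-- The contraction `C_a{}^p{}_d{}^f C_{bpcf}`, of which the Bel-Robinson tensor is the
symmetrization in `c, d` up to a trace. -/
def belSquare (C : Tensor4) (a b c d : Fin 4) : ℝ :=
  dot₂ (fun p f => C a p d f) (fun p f => C b p c f)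

lemma signature_mul_self (a : Fin 4) : signature a * signature a = 1 := by
  fin_cases a <;> simp [signature]

lemma signature_zero : signature 0 = -1 := rfl

lemma signature_succ (i : Fin 3) : signature i.succ = 1 := by
  fin_cases i <;> rfl

lemma gm_eq_ite (a b : Fin 4) : gm a b = if a = b then signature a else 0 := by
  fin_cases a <;> simp [gm, signature]

lemma gm_eq_diagonal : gm = diagonal signature := by
  ext a b
  rw [gm_eq_ite, diagonal_apply]

lemma gm_comm (a b : Fin 4) : gm a b = gm b a := by
  rw [gm_eq_diagonal]
  exact (isSymm_diagonal signature).apply b a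

lemma hm_comm (n : Fin 4 → ℝ) (a b : Fin 4) : hm n a b = hm n b a := by
  rw [hm, hm, gm_comm, mul_comm]

lemma dot₁_comm (x y : Fin 4 → ℝ) : dot₁ x y = dot₁ y x := by
  simp only [dot₁, mul_comm (x _)]

lemma dot₂_comm (X Y : Fin 4 → Fin 4 → ℝ) : dot₂ X Y = dot₂ Y X := by
  simp only [dot₂, dot₁_comm (X _)]

lemma dot₂_swap (X Y : Fin 4 → Fin 4 → ℝ) :
    dot₂ X Y = dot₂ (fun a b => X b a) (fun a b => Y b a) := by
  simp only [dot₂, dot₁, Finset.mul_sum]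
  rw [Finset.sum_comm]
  simp only [mul_left_comm]

lemma belSquare_swap (C : Tensor4) (a b c d : Fin 4) : belSquare C a b c d = belSquare C b a d c :=
  dot₂_comm _ _

lemma sum_gm_mul_eq_dot₁ (x y : Fin 4 → ℝ) : ∑ a, ∑ b, gm a b * x a * y b = dot₁ x y := by
  simp [gm_eq_ite, dot₁, mul_assoc]

lemma dualL_eq_dot₂ (C : Tensor4) (a b c d : Fin 4) :
    dualL C a b c d = 1 / 2 * dot₂ (eta a b) (fun p q => C p q c d) := by
  simp [dualL, dot₂, dot₁, gm_eq_ite, Finset.mul_sum, mul_assoc, mul_left_comm]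

lemma Wse_eq_dot₂ (C : Tensor4) (n : Fin 4 → ℝ) :
    Wse C n = dot₂ (EW C n) (EW C n) + dot₂ (BW C n) (BW C n) := by
  simp [Wse, dot₂, dot₁, gm_eq_ite, Finset.mul_sum, mul_assoc, mul_left_comm]

lemma Pse_eq_dot₂ (C : Tensor4) (n : Fin 4 → ℝ) (a : Fin 4) :
    Pse C n a = 2 * dot₂ (fun p q => dot₁ (BW C n p) (EW C n q)) (eps n a) := by
  simp [Pse, dot₂, dot₁, gm_eq_ite, Finset.mul_sum, Finset.sum_mul, mul_assoc, mul_left_comm]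

lemma tse_eq_dot₁ (C : Tensor4) (n : Fin 4 → ℝ) (a b : Fin 4) :
    tse C n a b = Wse C n * hm n a b
      - 2 * (dot₁ (BW C n a) (BW C n b) + dot₁ (EW C n a) (EW C n b)) := by
  simp [tse, dot₁, gm_eq_ite, mul_add, Finset.sum_add_distrib]

lemma Qse_eq_dot₂ (C : Tensor4) (n : Fin 4 → ℝ) (c d b : Fin 4) :
    Qse C n c d b = hm n c d * Pse C n b
      - 2 * (dot₂ (fun p q => BW C n d p * EW C n c q) (eps n b)
        + dot₂ (fun p q => BW C n c p * EW C n d q) (eps n b)) := by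
  simp [Qse, dot₂, dot₁, gm_eq_ite, Finset.mul_sum, ← Finset.sum_add_distrib, add_mul, mul_add,
    mul_assoc, mul_left_comm]

lemma q4_self_eq_sum_belSquare (C : Tensor4) :
    q4 C C = ∑ a, ∑ c, signature a * signature c * belSquare C a a c c := by
  simp only [q4, belSquare, dot₂, dot₁, gm_eq_ite, mul_ite, ite_mul, zero_mul, mul_zero,
    Finset.sum_ite_eq, Finset.mem_univ, if_true, Finset.mul_sum]
  refine Finset.sum_congr rfl fun a _ => ?_
  rw [Finset.sum_comm]
  refine Finset.sum_congr rfl fun c _ => Finset.sum_congr rfl fun p _ =>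
    Finset.sum_congr rfl fun f _ => ?_
  ring

lemma trace_eq_dot₂ (X : Fin 4 → Fin 4 → ℝ) : ∑ a, ∑ c, gm a c * X a c = dot₂ gm X := by
  simp [dot₂, dot₁, gm_eq_ite, ← mul_assoc, signature_mul_self]

lemma q4_self_eq_trace (C : Tensor4) :
    q4 C C = dot₂ gm fun a b => dot₂ gm (belSquare C a b) := by
  rw [q4_self_eq_sum_belSquare, ← trace_eq_dot₂]
  simp only [← trace_eq_dot₂, gm_eq_ite]
  simp [Finset.mul_sum, mul_assoc]

lemma BR_eq_belSquare (C : Tensor4) (a b c d : Fin 4) :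
    BR C a b c d = belSquare C a b c d + belSquare C a b d c
      - 1 / 8 * gm a b * gm c d * q4 C C := by
  simp [BR, belSquare, dot₂, dot₁, gm_eq_ite, Finset.mul_sum, mul_assoc, mul_left_comm]

lemma tse_comm (C : Tensor4) (n : Fin 4 → ℝ) (a b : Fin 4) : tse C n a b = tse C n b a := by
  simp only [tse_eq_dot₁, hm_comm n a, dot₁_comm (_ : Fin 4 → ℝ)]

end Contraction

section Pullback

/-- The components `x_a L^a_i` of a covector in the frame formed by the columns of `L`. -/
def pull₁ (L : Matrix (Fin 4) (Fin 4) ℝ) (x : Fin 4 → ℝ) (i : Fin 4) : ℝ := (x ᵥ* L) i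

/-- The components of a covariant tensor of rank 2 in the frame formed by the columns of `L`. -/
def pull₂ (L : Matrix (Fin 4) (Fin 4) ℝ) (X : Fin 4 → Fin 4 → ℝ) (i j : Fin 4) : ℝ :=
  pull₁ L (fun a => pull₁ L (X a) j) i

/-- The components of a covariant tensor of rank 3 in the frame formed by the columns of `L`. -/
def pull₃ (L : Matrix (Fin 4) (Fin 4) ℝ) (X : Fin 4 → Fin 4 → Fin 4 → ℝ) (i j k : Fin 4) : ℝ :=
  pull₁ L (fun a => pull₂ L (X a) j k) i

/-- The components of a covariant tensor of rank 4 in the frame formed by the columns of `L`. -/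
def pull₄ (L : Matrix (Fin 4) (Fin 4) ℝ) (T : Tensor4) : Tensor4 := fun i j k l =>
  pull₁ L (fun a => pull₃ L (T a) j k l) i

variable (L : Matrix (Fin 4) (Fin 4) ℝ)

lemma pull₁_add (x y : Fin 4 → ℝ) (i : Fin 4) :
    pull₁ L (fun a => x a + y a) i = pull₁ L x i + pull₁ L y i :=
  congr_fun (add_vecMul L x y) i

lemma pull₁_sub (x y : Fin 4 → ℝ) (i : Fin 4) :
    pull₁ L (fun a => x a - y a) i = pull₁ L x i - pull₁ L y i :=
  congr_fun (sub_vecMul L x y) i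

lemma pull₁_const_mul (r : ℝ) (x : Fin 4 → ℝ) (i : Fin 4) :
    pull₁ L (fun a => r * x a) i = r * pull₁ L x i :=
  congr_fun (smul_vecMul r x L) i

lemma pull₁_mul_const (x : Fin 4 → ℝ) (r : ℝ) (i : Fin 4) :
    pull₁ L (fun a => x a * r) i = pull₁ L x i * r := by
  simp only [mul_comm _ r, pull₁_const_mul]

lemma pull₁_sum {ι : Type*} [Fintype ι] (x : Fin 4 → ι → ℝ) (i : Fin 4) :
    pull₁ L (fun a => ∑ p, x a p) i = ∑ p, pull₁ L (fun a => x a p) i := by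
  simp only [pull₁, vecMul, dotProduct, Finset.sum_mul]
  exact Finset.sum_comm

lemma pull₁_comm (X : Fin 4 → Fin 4 → ℝ) (i j : Fin 4) :
    pull₁ L (fun a => pull₁ L (X a) j) i = pull₁ L (fun b => pull₁ L (fun a => X a b) i) j := by
  simp only [pull₁, vecMul, dotProduct, Finset.sum_mul]
  rw [Finset.sum_comm]
  simp only [mul_right_comm]

lemma dotProduct_pull₁ (x m : Fin 4 → ℝ) : ∑ i, pull₁ L x i * m i = ∑ a, x a * (L *ᵥ m) a :=
  (dotProduct_mulVec x L m).symm

lemma pull₂_eq_mul (X : Matrix (Fin 4) (Fin 4) ℝ) : pull₂ L X = Lᵀ * X * L := by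
  ext i j
  simp only [pull₂, pull₁, vecMul, dotProduct, mul_apply, transpose_apply, Finset.sum_mul]
  rw [Finset.sum_comm]
  exact Finset.sum_congr rfl fun _ _ => Finset.sum_congr rfl fun _ _ => by ring

variable {L}

lemma pull₁_injective (hL : IsUnit L) : Function.Injective (pull₁ L) :=
  vecMul_injective_of_isUnit hL

lemma pull₂_injective (hL : IsUnit L) : Function.Injective (pull₂ L) := fun X Y h => by
  funext a
  refine pull₁_injective hL (funext fun j => ?_)
  refine congr_fun (pull₁_injective hL (funext fun i => ?_) :
    (fun a => pull₁ L (X a) j) = fun a => pull₁ L (Y a) j) a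
  exact congr_fun₂ h i j

lemma pull₃_injective (hL : IsUnit L) : Function.Injective (pull₃ L) := fun X Y h => by
  funext a
  refine pull₂_injective hL (funext₂ fun j k => ?_)
  refine congr_fun (pull₁_injective hL (funext fun i => ?_) :
    (fun a => pull₂ L (X a) j k) = fun a => pull₂ L (Y a) j k) a
  exact congr_fun₃ h i j k

lemma pull₄_injective (hL : IsUnit L) : Function.Injective (pull₄ L) := fun S T h => by
  funext a
  refine pull₃_injective hL (funext₃ fun j k l => ?_)
  refine congr_fun (pull₁_injective hL (funext fun i => ?_) :
    (fun a => pull₃ L (S a) j k l) = fun a => pull₃ L (T a) j k l) a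
  exact congr_fun (congr_fun₃ h i j k) l

variable (L)

lemma pull₄_eq_sum (T : Tensor4) (i : Fin 4 → Fin 4) :
    pull₄ L T (i 0) (i 1) (i 2) (i 3) =
      ∑ f : Fin 4 → Fin 4, T (f 0) (f 1) (f 2) (f 3) * ∏ r, L (f r) (i r) := by
  have sum_eq {k : ℕ} (F : (Fin (k + 1) → Fin 4) → ℝ) : ∑ f, F f = ∑ a, ∑ g, F (vecCons a g) :=
    ((Fin.consEquiv fun _ => Fin 4).sum_comp F).symm.trans (Fintype.sum_prod_type _)
  simp only [sum_eq, Finset.univ_unique, Finset.sum_singleton]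
  simp only [pull₄, pull₃, pull₂, pull₁, vecMul, dotProduct, Finset.sum_mul, Fin.prod_univ_four]
  simp [mul_assoc, mul_left_comm, mul_comm]

/-- `T` with its slots permuted by `σ`. -/
def permSlots (σ : Equiv.Perm (Fin 4)) (T : Tensor4) : Tensor4 := fun a b c d =>
  T (![a, b, c, d] (σ 0)) (![a, b, c, d] (σ 1)) (![a, b, c, d] (σ 2)) (![a, b, c, d] (σ 3))

lemma pull₄_permSlots (σ : Equiv.Perm (Fin 4)) (T : Tensor4) :
    pull₄ L (permSlots σ T) = permSlots σ (pull₄ L T) := by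
  ext i j k l
  refine (pull₄_eq_sum L _ ![i, j, k, l]).trans ?_
  refine .trans ?_ (pull₄_eq_sum L T (![i, j, k, l] ∘ σ)).symm
  refine Fintype.sum_equiv (σ.symm.arrowCongr (.refl _)) _ _ fun f => ?_
  have hf : ![f 0, f 1, f 2, f 3] = f := by ext r; fin_cases r <;> rfl
  congr 1
  · simp [permSlots, hf]
  · exact (Equiv.prod_comp σ fun r => L (f r) (![i, j, k, l] r)).symm

lemma pull₄_sym4 (T : Tensor4) : pull₄ L (sym4 T) = sym4 (pull₄ L T) := by
  ext i j k l
  calc pull₄ L (sym4 T) i j k l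
      = 1 / 24 * ∑ σ, pull₄ L (permSlots σ T) i j k l := by
        simp only [← pull₁_sum, ← pull₁_const_mul, pull₄, pull₃, pull₂]
        rfl
    _ = sym4 (pull₄ L T) i j k l := by simp only [pull₄_permSlots]; rfl

end Pullback

section Volume

lemma eta_eq_det (a b c d : Fin 4) :
    eta a b c d = ((1 : Matrix (Fin 4) (Fin 4) ℝ).submatrix id ![a, b, c, d]).det := by
  have h : ∀ a b c d : Fin 4,
      ((b.val : ℤ) - a.val).sign * ((c.val : ℤ) - a.val).sign * ((d.val : ℤ) - a.val).sign *
        ((c.val : ℤ) - b.val).sign * ((d.val : ℤ) - b.val).sign * ((d.val : ℤ) - c.val).sign =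
      ((1 : Matrix (Fin 4) (Fin 4) ℤ).submatrix id ![a, b, c, d]).det := by
    simp only [det_apply, Fin.prod_univ_four]
    decide +kernel
  rw [eta, h, Int.cast_det]
  congr 1
  ext i j
  simp [one_apply]

lemma det_submatrix_eq_sum (L : Matrix (Fin 4) (Fin 4) ℝ) (i : Fin 4 → Fin 4) :
    (L.submatrix id i).det =
      ∑ f : Fin 4 → Fin 4, ((1 : Matrix (Fin 4) (Fin 4) ℝ).submatrix id f).det *
        ∏ r, L (f r) (i r) := by
  have columns : (L.submatrix id i)ᵀ = fun r => ∑ a, L a (i r) • (Pi.single a 1 : Fin 4 → ℝ) := by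
    ext r s
    simp [Pi.single_apply]
  have basis_columns (f : Fin 4 → Fin 4) : ((1 : Matrix (Fin 4) (Fin 4) ℝ).submatrix id f)ᵀ =
      fun r => (Pi.single (f r) 1 : Fin 4 → ℝ) := by
    ext r s
    simp [one_apply, Pi.single_apply]
  rw [← det_transpose, columns]
  refine (detRowAlternating.toMultilinearMap.map_sum
    fun r a => L a (i r) • (Pi.single a 1 : Fin 4 → ℝ)).trans ?_
  refine Finset.sum_congr rfl fun f _ => ?_
  rw [MultilinearMap.map_smul_univ, smul_eq_mul, mul_comm, ← det_transpose, basis_columns]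
  rfl

lemma pull₄_eta (L : Matrix (Fin 4) (Fin 4) ℝ) :
    pull₄ L eta = fun i j k l => L.det * eta i j k l := by
  ext i j k l
  have hf (f : Fin 4 → Fin 4) : ![f 0, f 1, f 2, f 3] = f := by ext r; fin_cases r <;> rfl
  calc pull₄ L eta i j k l = (L.submatrix id ![i, j, k, l]).det := by
        rw [det_submatrix_eq_sum]
        refine (pull₄_eq_sum L eta ![i, j, k, l]).trans ?_
        simp only [eta_eq_det, hf]
    _ = L.det * eta i j k l := by
        rw [eta_eq_det, ← det_mul]
        congr 1
        ext r s
        simp [mul_apply, one_apply]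

end Volume

section Lorentz

/-- The Minkowski metric as a matrix. -/
def minkowski : Matrix (Fin 4) (Fin 4) ℝ := diagonal signature

/-- `L` preserves the Minkowski metric and the orientation: its columns form a positively oriented
orthonormal frame. -/
structure IsProperLorentz (L : Matrix (Fin 4) (Fin 4) ℝ) : Prop where
  metric : Lᵀ * minkowski * L = minkowski
  det : L.det = 1

lemma minkowski_mul_self : minkowski * minkowski = 1 := by
  simp only [minkowski, diagonal_mul_diagonal, signature_mul_self, diagonal_one]

lemma dot₁_eq_dotProduct (x y : Fin 4 → ℝ) : dot₁ x y = x ⬝ᵥ (minkowski *ᵥ y) := by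
  simp only [dot₁, dotProduct, minkowski, mulVec_diagonal, mul_left_comm]

namespace IsProperLorentz

variable {L : Matrix (Fin 4) (Fin 4) ℝ}

lemma isUnit (hL : IsProperLorentz L) : IsUnit L :=
  (isUnit_iff_isUnit_det L).2 (hL.det ▸ isUnit_one)

lemma mul_minkowski_mul_transpose (hL : IsProperLorentz L) : L * minkowski * Lᵀ = minkowski := by
  have h : minkowski * Lᵀ * minkowski * L = 1 := by
    rw [mul_assoc, mul_assoc, ← mul_assoc Lᵀ, hL.metric, minkowski_mul_self]
  rw [mul_eq_one_comm] at h
  calc L * minkowski * Lᵀ = L * (minkowski * Lᵀ * minkowski) * minkowski := by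
        simp only [mul_assoc, minkowski_mul_self, mul_one]
    _ = minkowski := by rw [h, one_mul]

lemma pull₂_gm (hL : IsProperLorentz L) : pull₂ L gm = gm := by
  rw [gm_eq_diagonal]
  exact (pull₂_eq_mul L minkowski).trans hL.metric

lemma dot₁_pull₁ (hL : IsProperLorentz L) (x y : Fin 4 → ℝ) :
    dot₁ (pull₁ L x) (pull₁ L y) = dot₁ x y := by
  change dot₁ (x ᵥ* L) (y ᵥ* L) = _
  rw [dot₁_eq_dotProduct, dot₁_eq_dotProduct, ← dotProduct_mulVec, ← mulVec_transpose L y,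
    mulVec_mulVec, mulVec_mulVec, hL.mul_minkowski_mul_transpose]

lemma dot₂_pull₂ (hL : IsProperLorentz L) (X Y : Fin 4 → Fin 4 → ℝ) :
    dot₂ (pull₂ L X) (pull₂ L Y) = dot₂ X Y := by
  calc dot₂ (pull₂ L X) (pull₂ L Y)
      = dot₂ (fun j i => pull₁ L (fun a => pull₁ L (X a) j) i)
          (fun j i => pull₁ L (fun a => pull₁ L (Y a) j) i) := dot₂_swap _ _
    _ = dot₂ (fun j a => pull₁ L (X a) j) (fun j a => pull₁ L (Y a) j) := by
        simp only [dot₂]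
        exact Finset.sum_congr rfl fun j _ => congr_arg _ (hL.dot₁_pull₁ _ _)
    _ = dot₂ (fun a => pull₁ L (X a)) (fun a => pull₁ L (Y a)) := dot₂_swap _ _
    _ = dot₂ X Y := by simp only [dot₂, hL.dot₁_pull₁]

end IsProperLorentz

end Lorentz

section Covariance

/-- The right-hand side of the orthogonal splitting of the Bel-Robinson tensor. -/
def splitting (C : Tensor4) (n : Fin 4 → ℝ) : Tensor4 := fun a b c d =>
  Wse C n * lo n a * lo n b * lo n c * lo n d
    + 4 * sym4 (fun x y z w => Pse C n x * lo n y * lo n z * lo n w) a b c d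
    + 6 * sym4 (fun x y z w => tse C n x y * lo n z * lo n w) a b c d
    + 4 * sym4 (fun x y z w => Qse C n x y z * lo n w) a b c d
    + tse4 C n a b c d

variable (L : Matrix (Fin 4) (Fin 4) ℝ)

/-- The permutation exchanging the first and the second pair of slots. -/
def pairSwap : Equiv.Perm (Fin 4) := ⟨![2, 3, 0, 1], ![2, 3, 0, 1], by decide, by decide⟩

lemma pull₁_dot₁_left (X : Fin 4 → Fin 4 → ℝ) (y : Fin 4 → ℝ) (i : Fin 4) :
    pull₁ L (fun a => dot₁ (X a) y) i = dot₁ (fun p => pull₁ L (fun a => X a p) i) y := by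
  simp only [dot₁, pull₁_sum, pull₁_const_mul, pull₁_mul_const]

lemma pull₁_dot₁_right (x : Fin 4 → ℝ) (Y : Fin 4 → Fin 4 → ℝ) (i : Fin 4) :
    pull₁ L (fun a => dot₁ x (Y a)) i = dot₁ x (fun p => pull₁ L (fun a => Y a p) i) := by
  simp only [dot₁, pull₁_sum, pull₁_const_mul]

lemma pull₁_dot₂_left (X : Fin 4 → Fin 4 → Fin 4 → ℝ) (Y : Fin 4 → Fin 4 → ℝ) (i : Fin 4) :
    pull₁ L (fun a => dot₂ (X a) Y) i = dot₂ (fun p q => pull₁ L (fun a => X a p q) i) Y := by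
  simp only [dot₂, pull₁_sum, pull₁_const_mul, pull₁_dot₁_left]

lemma pull₁_dot₂_right (X : Fin 4 → Fin 4 → ℝ) (Y : Fin 4 → Fin 4 → Fin 4 → ℝ) (i : Fin 4) :
    pull₁ L (fun a => dot₂ X (Y a)) i = dot₂ X (fun p q => pull₁ L (fun a => Y a p q) i) := by
  simp only [dot₂, pull₁_sum, pull₁_const_mul, pull₁_dot₁_right]

lemma pull₄_add (S T : Tensor4) :
    pull₄ L (fun a b c d => S a b c d + T a b c d) =
      fun i j k l => pull₄ L S i j k l + pull₄ L T i j k l := by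
  ext i j k l
  simp only [pull₄, pull₃, pull₂, pull₁_add]

lemma pull₄_const_mul (r : ℝ) (T : Tensor4) :
    pull₄ L (fun a b c d => r * T a b c d) = fun i j k l => r * pull₄ L T i j k l := by
  ext i j k l
  simp only [pull₄, pull₃, pull₂, pull₁_const_mul]

lemma firstBianchi_pull₄ {T : Tensor4}
    (hT : ∀ a b c d, (1 / 6 : ℝ) * (T a b c d + T b c a d + T c a b d
      - T b a c d - T a c b d - T c b a d) = 0) (i j k l : Fin 4) :
    (1 / 6 : ℝ) * (pull₄ L T i j k l + pull₄ L T j k i l + pull₄ L T k i j l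
      - pull₄ L T j i k l - pull₄ L T i k j l - pull₄ L T k j i l) = 0 := by
  let cycle : Equiv.Perm (Fin 4) := .swap 0 1 * .swap 1 2
  have h : (fun a b c d => T a b c d + permSlots cycle T a b c d
      + permSlots cycle⁻¹ T a b c d + -1 * permSlots (.swap 0 1) T a b c d
      + -1 * permSlots (.swap 1 2) T a b c d + -1 * permSlots (.swap 0 2) T a b c d)
      = fun a b c d => 0 * T a b c d :=
    funext₂ fun a b => funext₂ fun c d => by
      change T a b c d + T b c a d + T c a b d + -1 * T b a c d + -1 * T a c b d
        + -1 * T c b a d = 0 * T a b c d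
      linear_combination 6 * hT a b c d
  have h' := congr_fun₂ (congr_fun₂ (congr_arg (pull₄ L) h) i j) k l
  simp only [pull₄_const_mul, pull₄_add, pull₄_permSlots] at h'
  change pull₄ L T i j k l + pull₄ L T j k i l + pull₄ L T k i j l + -1 * pull₄ L T j i k l
    + -1 * pull₄ L T i k j l + -1 * pull₄ L T k j i l = 0 * _ at h'
  linear_combination 1 / 6 * h'

lemma pull₂_contract (A : Tensor4) (m : Fin 4 → ℝ) :
    pull₂ L (fun a c => ∑ b, ∑ d, A a c b d * (L *ᵥ m) b * (L *ᵥ m) d) =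
      fun i k => ∑ j, ∑ l, pull₄ L A i k j l * m j * m l := by
  have contract (X : Fin 4 → Fin 4 → ℝ) : ∑ b, ∑ d, X b d * (L *ᵥ m) b * (L *ᵥ m) d =
      ∑ j, ∑ l, pull₂ L X j l * m j * m l := by
    calc ∑ b, ∑ d, X b d * (L *ᵥ m) b * (L *ᵥ m) d
        = ∑ b, (∑ l, pull₁ L (X b) l * m l) * (L *ᵥ m) b := by
          simp only [dotProduct_pull₁, Finset.sum_mul]
          exact Finset.sum_congr rfl fun b _ => Finset.sum_congr rfl fun d _ =>
            mul_right_comm _ _ _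
      _ = ∑ j, (∑ l, pull₂ L X j l * m l) * m j := by
          simp only [← dotProduct_pull₁, pull₁_sum, pull₁_mul_const, pull₂]
      _ = ∑ j, ∑ l, pull₂ L X j l * m j * m l := by
          simp only [Finset.sum_mul]
          exact Finset.sum_congr rfl fun j _ => Finset.sum_congr rfl fun l _ =>
            mul_right_comm _ _ _
  ext i k
  simp only [contract, pull₄, pull₃, pull₂, pull₁_sum, pull₁_mul_const]

lemma pull₂_EW (C : Tensor4) (m : Fin 4 → ℝ) : pull₂ L (EW C (L *ᵥ m)) = EW (pull₄ L C) m := by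
  have swap : pull₄ L (fun a c b d => C a b c d) = fun i k j l => pull₄ L C i j k l :=
    pull₄_permSlots L (.swap 1 2) C
  refine (pull₂_contract L (fun a c b d => C a b c d) m).trans ?_
  rw [swap]
  rfl

namespace IsProperLorentz

variable {L} (hL : IsProperLorentz L)
include hL

lemma pull₁_lo (m : Fin 4 → ℝ) : pull₁ L (lo (L *ᵥ m)) = lo m := by
  have lo_eq (n : Fin 4 → ℝ) : lo n = minkowski *ᵥ n := by
    rw [minkowski, ← gm_eq_diagonal]
    rfl
  change lo (L *ᵥ m) ᵥ* L = _
  rw [lo_eq, lo_eq, ← mulVec_transpose, mulVec_mulVec, mulVec_mulVec, hL.metric]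

lemma pull₂_hm (m : Fin 4 → ℝ) : pull₂ L (hm (L *ᵥ m)) = hm m := by
  ext i j
  change pull₁ L (fun a => pull₁ L (fun b => gm a b + lo _ a * lo _ b) j) i = _
  simp only [pull₁_add, pull₁_const_mul, pull₁_mul_const]
  exact congr_arg₂ _ (congr_fun₂ hL.pull₂_gm i j) (by rw [hL.pull₁_lo])

lemma pull₃_eps (m : Fin 4 → ℝ) : pull₃ L (eps (L *ᵥ m)) = eps m := by
  ext i j k
  calc pull₃ L (eps (L *ᵥ m)) i j k = ∑ d, pull₃ L (eta d) i j k * (L *ᵥ m) d := by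
        change pull₁ L (fun a => pull₁ L (fun b => pull₁ L (fun c =>
          ∑ d, (L *ᵥ m) d * eta d a b c) k) j) i = _
        simp only [pull₁_sum, pull₁_const_mul]
        exact Finset.sum_congr rfl fun d _ => mul_comm _ _
    _ = ∑ d, pull₄ L eta d i j k * m d := (dotProduct_pull₁ L _ m).symm
    _ = eps m i j k := by simp only [pull₄_eta, hL.det, one_mul, eps, mul_comm (m _)]

lemma pull₂_dot₁ (X Y : Fin 4 → Fin 4 → ℝ) :
    pull₂ L (fun a b => dot₁ (X a) (Y b)) = fun i j => dot₁ (pull₂ L X i) (pull₂ L Y j) := by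
  ext i j
  simp only [← hL.dot₁_pull₁ (X _), pull₂, pull₁_dot₁_left, pull₁_dot₁_right]
  rfl

lemma pull₄_dot₂ (A B : Tensor4) :
    pull₄ L (fun a b c d => dot₂ (A a b) (B c d)) =
      fun i j k l => dot₂ (pull₄ L A i j) (pull₄ L B k l) := by
  ext i j k l
  simp only [← hL.dot₂_pull₂ (A _ _), pull₄, pull₃, pull₂, pull₁_dot₂_left, pull₁_dot₂_right]
  rfl

lemma pull₃_dot₂ (A : Tensor4) (Z : Fin 4 → Fin 4 → Fin 4 → ℝ) :
    pull₃ L (fun c d b => dot₂ (A c d) (Z b)) =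
      fun i j k => dot₂ (pull₄ L A i j) (pull₃ L Z k) := by
  ext i j k
  simp only [← hL.dot₂_pull₂ (A _ _), pull₃, pull₂, pull₁_dot₂_left, pull₁_dot₂_right]
  rfl

lemma pull₁_dot₂ (X : Fin 4 → Fin 4 → ℝ) (Z : Fin 4 → Fin 4 → Fin 4 → ℝ) :
    pull₁ L (fun b => dot₂ X (Z b)) = fun k => dot₂ (pull₂ L X) (pull₃ L Z k) := by
  ext k
  simp only [← hL.dot₂_pull₂ X, pull₁_dot₂_right]
  rfl

lemma pull₄_dualL (C : Tensor4) : pull₄ L (dualL C) = dualL (pull₄ L C) := by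
  have swap : pull₄ L (fun c d p q => C p q c d) = fun k l p q => pull₄ L C p q k l :=
    pull₄_permSlots L pairSwap C
  have h := hL.pull₄_dot₂ eta (fun c d p q => C p q c d)
  rw [swap, pull₄_eta, hL.det] at h
  simp only [one_mul] at h
  ext i j k l
  rw [show dualL C = _ from funext₂ fun a b => funext₂ (dualL_eq_dot₂ C a b), pull₄_const_mul,
    dualL_eq_dot₂, h]

lemma pull₂_BW (C : Tensor4) (m : Fin 4 → ℝ) : pull₂ L (BW C (L *ᵥ m)) = BW (pull₄ L C) m := by
  refine (pull₂_EW L (dualL C) m).trans ?_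
  rw [hL.pull₄_dualL]
  rfl

lemma Wse_mulVec (C : Tensor4) (m : Fin 4 → ℝ) : Wse C (L *ᵥ m) = Wse (pull₄ L C) m := by
  rw [Wse_eq_dot₂, Wse_eq_dot₂, ← hL.dot₂_pull₂, ← hL.dot₂_pull₂ (BW _ _), pull₂_EW,
    hL.pull₂_BW]

lemma pull₁_Pse (C : Tensor4) (m : Fin 4 → ℝ) : pull₁ L (Pse C (L *ᵥ m)) = Pse (pull₄ L C) m := by
  ext i
  rw [show Pse C _ = _ from funext (Pse_eq_dot₂ C _), Pse_eq_dot₂, pull₁_const_mul,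
    hL.pull₁_dot₂, hL.pull₂_dot₁, pull₂_EW, hL.pull₂_BW, hL.pull₃_eps]

lemma pull₂_tse (C : Tensor4) (m : Fin 4 → ℝ) : pull₂ L (tse C (L *ᵥ m)) = tse (pull₄ L C) m := by
  ext i j
  rw [tse_eq_dot₁, ← hL.Wse_mulVec, ← hL.pull₂_hm, ← pull₂_EW, ← hL.pull₂_BW]
  have hB := congr_fun₂ (hL.pull₂_dot₁ (BW C (L *ᵥ m)) (BW C (L *ᵥ m))) i j
  have hE := congr_fun₂ (hL.pull₂_dot₁ (EW C (L *ᵥ m)) (EW C (L *ᵥ m))) i j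
  simp only [← hB, ← hE, pull₂, ← pull₁_const_mul, ← pull₁_add, ← pull₁_sub, ← tse_eq_dot₁]

lemma pull₃_Qse (C : Tensor4) (m : Fin 4 → ℝ) : pull₃ L (Qse C (L *ᵥ m)) = Qse (pull₄ L C) m := by
  ext i j k
  have swap (T : Fin 4 → Fin 4 → Fin 4 → ℝ) (i j k : Fin 4) :
      pull₃ L (fun c d b => T d c b) i j k = pull₃ L T j i k :=
    pull₁_comm L (fun c d => pull₁ L (T d c) k) i j
  have cross (X Y : Fin 4 → Fin 4 → ℝ) (Z : Fin 4 → Fin 4 → Fin 4 → ℝ) (i j k : Fin 4) :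
      pull₃ L (fun c d b => dot₂ (fun p q => X c p * Y d q) (Z b)) i j k =
        dot₂ (fun p q => pull₂ L X i p * pull₂ L Y j q) (pull₃ L Z k) := by
    rw [hL.pull₃_dot₂ fun c d p q => X c p * Y d q]
    refine congr_arg (dot₂ · _) (funext₂ fun p q => ?_)
    simp only [pull₄, pull₃, pull₂, pull₁_const_mul, pull₁_mul_const]
  set n := L *ᵥ m
  have hQ : Qse C n = fun c d b => hm n c d * Pse C n b -
      2 * (dot₂ (fun p q => BW C n d p * EW C n c q) (eps n b)
        + dot₂ (fun p q => BW C n c p * EW C n d q) (eps n b)) :=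
    funext₂ fun c d => funext (Qse_eq_dot₂ C n c d)
  calc pull₃ L (Qse C n) i j k
      = pull₂ L (hm n) i j * pull₁ L (Pse C n) k - 2 *
          (pull₃ L (fun c d b => dot₂ (fun p q => BW C n d p * EW C n c q) (eps n b)) i j k +
          pull₃ L (fun c d b => dot₂ (fun p q => BW C n c p * EW C n d q) (eps n b)) i j k) := by
        rw [hQ]
        simp only [pull₃, pull₂, pull₁_add, pull₁_sub, pull₁_const_mul, pull₁_mul_const]
    _ = Qse (pull₄ L C) m i j k := by
        rw [swap fun c d b => dot₂ (fun p q => BW C n c p * EW C n d q) (eps n b), cross, cross,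
          Qse_eq_dot₂, hL.pull₂_hm, pull₂_EW, hL.pull₂_BW, hL.pull₁_Pse, hL.pull₃_eps]

lemma pull₄_tse4 (C : Tensor4) (m : Fin 4 → ℝ) :
    pull₄ L (tse4 C (L *ᵥ m)) = tse4 (pull₄ L C) m := by
  ext i j k l
  have ordered (C : Tensor4) (n : Fin 4 → ℝ) (a b c d : Fin 4) : tse4 C n a b c d =
      4 * (BW C n a b * BW C n c d + EW C n a b * EW C n c d) - tse C n a b * hm n c d
        + (tse C n a c * hm n b d + tse C n a d * hm n b c)
        + (hm n a d * tse C n b c + hm n a c * tse C n b d) - hm n a b * tse C n c d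
        + Wse C n * (hm n a b * hm n c d - (hm n a c * hm n b d + hm n a d * hm n b c)) := by
    rw [tse4, tse_comm C n c a, tse_comm C n d a, tse_comm C n c b, tse_comm C n d b,
      hm_comm n d b, hm_comm n c b]
    ring
  rw [ordered, ← hL.Wse_mulVec, ← hL.pull₂_hm, ← hL.pull₂_tse, ← pull₂_EW, ← hL.pull₂_BW,
    show tse4 C (L *ᵥ m) = _ from funext₂ fun a b => funext₂ (ordered C _ a b)]
  simp only [pull₄, pull₃, pull₂, pull₁_add, pull₁_sub, pull₁_const_mul, pull₁_mul_const]

lemma pull₄_splitting (C : Tensor4) (m : Fin 4 → ℝ) :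
    pull₄ L (splitting C (L *ᵥ m)) = splitting (pull₄ L C) m := by
  have hlo := hL.pull₁_lo m
  have hP : pull₄ L (fun a b c d => Pse C (L *ᵥ m) a * lo (L *ᵥ m) b * lo (L *ᵥ m) c *
      lo (L *ᵥ m) d) = fun i j k l => Pse (pull₄ L C) m i * lo m j * lo m k * lo m l := by
    ext i j k l
    simp only [pull₄, pull₃, pull₂, pull₁_const_mul, pull₁_mul_const, hlo, hL.pull₁_Pse]
  have ht : pull₄ L (fun a b c d => tse C (L *ᵥ m) a b * lo (L *ᵥ m) c * lo (L *ᵥ m) d) =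
      fun i j k l => tse (pull₄ L C) m i j * lo m k * lo m l := by
    ext i j k l
    simp only [pull₄, pull₃, pull₂, pull₁_const_mul, pull₁_mul_const, hlo, ← hL.pull₂_tse]
  have hQ : pull₄ L (fun a b c d => Qse C (L *ᵥ m) a b c * lo (L *ᵥ m) d) =
      fun i j k l => Qse (pull₄ L C) m i j k * lo m l := by
    ext i j k l
    simp only [pull₄, pull₃, pull₂, pull₁_const_mul, pull₁_mul_const, hlo, ← hL.pull₃_Qse]
  unfold splitting
  simp only [pull₄_add, pull₄_const_mul]
  rw [pull₄_sym4, pull₄_sym4, pull₄_sym4, hP, ht, hQ, hL.pull₄_tse4]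
  ext i j k l
  simp only [pull₄, pull₃, pull₂, pull₁_const_mul, pull₁_mul_const, hlo, hL.Wse_mulVec]

lemma pull₄_belSquare (C : Tensor4) : pull₄ L (belSquare C) = belSquare (pull₄ L C) := by
  have swap₁₂ : pull₄ L (fun a d p f => C a p d f) = fun i l p f => pull₄ L C i p l f :=
    pull₄_permSlots L (.swap 1 2) C
  have h := pull₄_permSlots L (.swap 1 2 * .swap 1 3) fun a d b c => belSquare C a b c d
  have h' := hL.pull₄_dot₂ (fun a d p f => C a p d f) (fun a d p f => C a p d f)
  rw [swap₁₂] at h'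
  refine h.trans ?_
  ext i j k l
  exact congr_fun₂ (congr_fun₂ h' i l) j k

lemma dot₂_gm_pull₂ (X : Fin 4 → Fin 4 → ℝ) : dot₂ gm (pull₂ L X) = dot₂ gm X := by
  rw [← hL.dot₂_pull₂ gm X, hL.pull₂_gm]

lemma pull₂_trace (T : Tensor4) :
    pull₂ L (fun a b => dot₂ gm (T a b)) = fun i j => dot₂ gm (pull₄ L T i j) := by
  ext i j
  simp only [← hL.dot₂_gm_pull₂ (T _ _), pull₂, pull₁_dot₂_right]
  rfl

lemma q4_self_pull₄ (C : Tensor4) : q4 (pull₄ L C) (pull₄ L C) = q4 C C := by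
  rw [q4_self_eq_trace, q4_self_eq_trace, ← hL.pull₄_belSquare, ← hL.pull₂_trace,
    hL.dot₂_gm_pull₂]

lemma pull₄_BR (C : Tensor4) : pull₄ L (BR C) = BR (pull₄ L C) := by
  have hBR : BR C = fun a b c d => belSquare C a b c d + belSquare C a b d c +
      -(1 / 8) * q4 C C * (gm a b * gm c d) := by
    ext a b c d
    rw [BR_eq_belSquare]
    ring
  have swap : pull₄ L (fun a b c d => belSquare C a b d c) =
      fun i j k l => pull₄ L (belSquare C) i j l k :=
    pull₄_permSlots L (.swap 2 3) (belSquare C)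
  have hgm : pull₄ L (fun a b c d => gm a b * gm c d) = fun i j k l => gm i j * gm k l := by
    ext i j k l
    simp only [pull₄, pull₃, pull₂, pull₁_const_mul, pull₁_mul_const]
    exact congr_arg₂ (· * ·) (congr_fun₂ hL.pull₂_gm i j) (congr_fun₂ hL.pull₂_gm k l)
  ext i j k l
  rw [hBR, pull₄_add, pull₄_add, swap, hL.pull₄_belSquare, pull₄_const_mul, hgm, BR_eq_belSquare,
    hL.q4_self_pull₄]
  ring

lemma traceFree_pull₄ {T : Tensor4} (hT : ∀ b d, ∑ a, ∑ c, gm a c * T a b c d = 0) (j l : Fin 4) :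
    ∑ i, ∑ k, gm i k * pull₄ L T i j k l = 0 := by
  have swap : pull₄ L (fun b d a c => T a b c d) = fun j l i k => pull₄ L T i j k l :=
    pull₄_permSlots L ⟨![2, 0, 3, 1], ![1, 3, 0, 2], by decide, by decide⟩ T
  have hzero : (fun b d => dot₂ gm fun a c => T a b c d) = fun _ _ => 0 :=
    funext₂ fun b d => (trace_eq_dot₂ _).symm.trans (hT b d)
  have h := hL.pull₂_trace fun b d a c => T a b c d
  rw [swap, hzero] at h
  rw [trace_eq_dot₂, ← congr_fun₂ h j l]
  simp [pull₂, pull₁, vecMul, dotProduct]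

lemma weylSymm_pull₄ {C : Tensor4} (hC : WeylSymm C) : WeylSymm (pull₄ L C) where
  antisymm₁ i j k l := by
    have h : C = fun a b c d => -1 * permSlots (.swap 0 1) C a b c d :=
      funext₂ fun a b => funext₂ fun c d => (hC.antisymm₁ a b c d).trans (neg_one_mul _).symm
    conv_lhs => rw [h, pull₄_const_mul, pull₄_permSlots]
    exact neg_one_mul _
  antisymm₂ i j k l := by
    have h : C = fun a b c d => -1 * permSlots (.swap 2 3) C a b c d :=
      funext₂ fun a b => funext₂ fun c d => (hC.antisymm₂ a b c d).trans (neg_one_mul _).symm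
    conv_lhs => rw [h, pull₄_const_mul, pull₄_permSlots]
    exact neg_one_mul _
  pairSymm i j k l := by
    have h : C = permSlots pairSwap C := funext₂ fun a b => funext₂ fun c d => hC.pairSymm a b c d
    conv_lhs => rw [h, pull₄_permSlots]
    rfl
  firstBianchi := firstBianchi_pull₄ L hC.firstBianchi
  traceFree := hL.traceFree_pull₄ hC.traceFree

end IsProperLorentz

end Covariance

section Frame

/-- The observer at rest in the standard frame. -/
def restObserver : Fin 4 → ℝ := Pi.single 0 1

/-- The Lorentz reflection along a vector `v` that is not null. -/
def reflection (v : Fin 4 → ℝ) : Matrix (Fin 4) (Fin 4) ℝ :=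
  1 - (2 / dot₁ v v) • vecMulVec v (minkowski *ᵥ v)

lemma reflection_metric {v : Fin 4 → ℝ} (hv : dot₁ v v ≠ 0) :
    (reflection v)ᵀ * minkowski * reflection v = minkowski := by
  have hself : minkowskiᵀ = minkowski := diagonal_transpose _
  have hvv : v ⬝ᵥ minkowski *ᵥ v = dot₁ v v := (dot₁_eq_dotProduct v v).symm
  set w := minkowski *ᵥ v with hw
  have h₁ : minkowski * vecMulVec v w = vecMulVec w w := mul_vecMulVec _ _ _
  have h₂ : vecMulVec w v * minkowski = vecMulVec w w := by
    rw [vecMulVec_mul, ← hself, vecMul_transpose]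
  have h₃ : vecMulVec w w * vecMulVec v w = dot₁ v v • vecMulVec w w := by
    rw [vecMulVec_mul_vecMulVec, dotProduct_comm w v, hvv, vecMulVec_smul]
  rw [reflection, ← hw, transpose_sub, transpose_smul, transpose_vecMulVec, transpose_one]
  simp only [sub_mul, mul_sub, one_mul, mul_one, Matrix.smul_mul, Matrix.mul_smul, h₁, h₂, h₃,
    smul_smul]
  have hcoeff : 2 / dot₁ v v * (2 / dot₁ v v * dot₁ v v) = 2 / dot₁ v v + 2 / dot₁ v v := by
    field_simp
    norm_num
  rw [hcoeff, add_smul]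
  abel

lemma reflection_mulVec {v x : Fin 4 → ℝ} (hv : dot₁ v v ≠ 0) (hx : 2 * dot₁ v x = -dot₁ v v) :
    reflection v *ᵥ x = x + v := by
  have hc : 2 / dot₁ v v * dot₁ x v = -1 := by
    rw [dot₁_comm x v]
    field_simp
    linarith
  rw [reflection, sub_mulVec, one_mulVec, smul_mulVec, vecMulVec_mulVec, dotProduct_comm,
    ← dot₁_eq_dotProduct, op_smul_eq_smul, smul_smul, hc, neg_one_smul, sub_neg_eq_add]

lemma exists_metric_mulVec_restObserver {n : Fin 4 → ℝ} (hn : dot₁ n n = -1) :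
    ∃ L : Matrix (Fin 4) (Fin 4) ℝ, Lᵀ * minkowski * L = minkowski ∧ L *ᵥ restObserver = n := by
  have hn' : n 0 ^ 2 = 1 + n 1 ^ 2 + n 2 ^ 2 + n 3 ^ 2 := by
    simp only [dot₁, signature, Fin.sum_univ_four, cons_val_zero, neg_mul, one_mul, cons_val_one,
      cons_val] at hn
    linarith
  have hvv : dot₁ (n - restObserver) (n - restObserver) = 2 * (n 0 - 1) := by
    simp [dot₁, signature, restObserver, Fin.sum_univ_four]
    linarith
  have hvx : dot₁ (n - restObserver) restObserver = 1 - n 0 := by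
    simp [dot₁, signature, restObserver, Fin.sum_univ_four]
  rcases eq_or_ne (n 0) 1 with h0 | h0
  · have hrest : n = restObserver := by
      ext i
      fin_cases i <;> simp [restObserver] <;> nlinarith [sq_nonneg (n 1), sq_nonneg (n 2)]
    exact ⟨1, by simp, by simp [hrest]⟩
  · have hne : dot₁ (n - restObserver) (n - restObserver) ≠ 0 := by
      rw [hvv]
      exact mul_ne_zero two_ne_zero (sub_ne_zero.2 h0)
    refine ⟨_, reflection_metric hne, ?_⟩
    rw [reflection_mulVec hne (by rw [hvv, hvx]; ring), add_sub_cancel]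

lemma det_eq_one_or_neg_one_of_metric {L : Matrix (Fin 4) (Fin 4) ℝ}
    (hL : Lᵀ * minkowski * L = minkowski) : L.det = 1 ∨ L.det = -1 := by
  have hη : minkowski.det ≠ 0 := by
    simp [minkowski, signature, det_diagonal, Fin.prod_univ_four]
  have hdet := congr_arg det hL
  rw [det_mul, det_mul, det_transpose, mul_right_comm] at hdet
  exact mul_self_eq_one_iff.1 (mul_eq_right₀ hη |>.1 hdet)

lemma exists_isProperLorentz_mulVec_restObserver {n : Fin 4 → ℝ} (hn : dot₁ n n = -1) :
    ∃ L, IsProperLorentz L ∧ L *ᵥ restObserver = n := by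
  obtain ⟨L, hL, hLn⟩ := exists_metric_mulVec_restObserver hn
  rcases det_eq_one_or_neg_one_of_metric hL with hdet | hdet
  · exact ⟨L, ⟨hL, hdet⟩, hLn⟩
  · set R : Matrix (Fin 4) (Fin 4) ℝ := diagonal ![1, 1, 1, -1] with hR
    have hRη : Rᵀ * minkowski * R = minkowski := by
      simp only [hR, minkowski, diagonal_transpose, diagonal_mul_diagonal]
      congr 1
      ext i
      fin_cases i <;> simp [signature]
    have hRrest : R *ᵥ restObserver = restObserver := by
      ext i
      fin_cases i <;> simp [hR, restObserver, mulVec_diagonal]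
    refine ⟨L * R, ⟨?_, ?_⟩, by rw [← mulVec_mulVec, hRrest, hLn]⟩
    · calc (L * R)ᵀ * minkowski * (L * R) = Rᵀ * (Lᵀ * minkowski * L) * R := by
            simp only [transpose_mul, mul_assoc]
        _ = minkowski := by rw [hL, hRη]
    · simp [hdet, hR, det_diagonal, Fin.prod_univ_four]

end Frame

/-- The Kronecker symbol. -/
local notation "δ" => (1 : Matrix (Fin 3) (Fin 3) ℝ)

section Spatial

/-- The antisymmetric matrix `∑ l, ε j k l * x l` dual to a spatial vector `x`. -/
def hodge (x : Fin 3 → ℝ) : Matrix (Fin 3) (Fin 3) ℝ :=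
  !![0, x 2, -x 1; -x 2, 0, x 0; x 1, -x 0, 0]

/-- The vector `∑ j k, ε i j k * X j k` dual to the antisymmetric part of a spatial tensor `X`. -/
def axial (X : Matrix (Fin 3) (Fin 3) ℝ) : Fin 3 → ℝ :=
  ![X 1 2 - X 2 1, X 2 0 - X 0 2, X 0 1 - X 1 0]

/-- The squared norm `M_{ij} M^{ij}` of a spatial tensor. -/
def normSq (M : Matrix (Fin 3) (Fin 3) ℝ) : ℝ := ∑ i, M i ⬝ᵥ M i

/-- The spatial form `Q_{ijk}` of the third-order part of the splitting, for electric part `E` and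
magnetic part `B`. -/
def energyFlux (E B : Matrix (Fin 3) (Fin 3) ℝ) (i j k : Fin 3) : ℝ :=
  2 * (δ i j * axial (B * Eᵀ) k - axial (vecMulVec (B i) (E j)) k
    - axial (vecMulVec (B j) (E i)) k)

/-- Symmetric trace-free spatial tensors, such as the electric and magnetic parts of a Weyl
tensor. -/
structure IsSymmTraceFree (M : Matrix (Fin 3) (Fin 3) ℝ) : Prop where
  symm : M.IsSymm
  trace : M.trace = 0

lemma IsSymmTraceFree.exists_eq {M : Matrix (Fin 3) (Fin 3) ℝ} (hM : IsSymmTraceFree M) :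
    ∃ a b c d e, M = !![a, b, c; b, d, e; c, e, -a - d] := by
  refine ⟨M 0 0, M 0 1, M 0 2, M 1 1, M 1 2, ?_⟩
  have htrace := hM.trace
  rw [trace_fin_three] at htrace
  ext i j
  fin_cases i <;> fin_cases j
  all_goals simp [hM.symm.apply 0 1, hM.symm.apply 0 2, hM.symm.apply 1 2]
  linarith

lemma sum_mul_eq_dotProduct_of_isSymm {M : Matrix (Fin 3) (Fin 3) ℝ} (hM : M.IsSymm)
    (i j : Fin 3) : ∑ k, M k i * M k j = M i ⬝ᵥ M j :=
  congr_arg₂ (· ⬝ᵥ ·) (congr_fun hM i) (congr_fun hM j)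

lemma hodge_neg (x : Fin 3 → ℝ) : hodge (-x) = -hodge x := by
  ext i j
  fin_cases i <;> fin_cases j <;> simp [hodge]

lemma hodge_mul_transpose_hodge (x y : Fin 3 → ℝ) :
    hodge x * (hodge y)ᵀ = (x ⬝ᵥ y) • 1 - vecMulVec y x := by
  ext i j
  fin_cases i <;> fin_cases j <;>
    simp [hodge, mul_apply, vecMulVec_apply, dotProduct, Fin.sum_univ_three] <;> ring

lemma sum_hodge_mul_hodge (x y : Fin 3 → ℝ) (i j : Fin 3) :
    ∑ k, hodge x i k * hodge y j k = x ⬝ᵥ y * δ i j - y i * x j :=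
  congr_fun₂ (hodge_mul_transpose_hodge x y) i j

lemma eq_hodge_of_antisymm {X : Matrix (Fin 3) (Fin 3) ℝ} (hX : ∀ i j, X i j = -X j i) :
    X = hodge ![X 1 2, X 2 0, X 0 1] := by
  ext i j
  fin_cases i <;> fin_cases j <;> simp [hodge] <;>
    linarith [hX 0 0, hX 1 1, hX 2 2, hX 0 2, hX 1 0, hX 2 1]

/-- The double dual of `R` is minus its Einstein tensor, which is `M` because `M` has trace zero. -/
lemma eq_neg_hodge_hodge_of_ricci {R : Fin 3 → Fin 3 → Fin 3 → Fin 3 → ℝ}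
    {M : Matrix (Fin 3) (Fin 3) ℝ} (h₁ : ∀ i j k l, R i j k l = -R j i k l)
    (h₂ : ∀ i j k l, R i j k l = -R i j l k) (hM : IsSymmTraceFree M)
    (hR : ∀ i j, ∑ k, R k i k j = M i j) (i j k l : Fin 3) :
    R i j k l = -hodge (fun m => hodge (M m) k l) i j := by
  set N : Matrix (Fin 3) (Fin 3) ℝ := fun m =>
    ![![R 1 2, R 2 0, R 0 1] m 1 2, ![R 1 2, R 2 0, R 0 1] m 2 0, ![R 1 2, R 2 0, R 0 1] m 0 1]
  have hRN (i j k l : Fin 3) : R i j k l = hodge (fun m => hodge (N m) k l) i j := by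
    have hpair (m : Fin 3) : ![R 1 2, R 2 0, R 0 1] m k l = hodge (N m) k l := by
      refine congr_fun₂ (eq_hodge_of_antisymm fun k l => ?_) k l
      fin_cases m <;> exact h₂ _ _ _ _
    calc R i j k l = hodge ![R 1 2 k l, R 2 0 k l, R 0 1 k l] i j :=
          congr_fun₂ (eq_hodge_of_antisymm fun i j => h₁ i j k l) i j
      _ = hodge (fun m => hodge (N m) k l) i j := by
          congr 2
          ext m
          rw [← hpair]
          fin_cases m <;> rfl
  simp only [hRN, Fin.sum_univ_three] at hR
  have hricci : ∀ i j, N.trace * δ i j - N j i = M i j := by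
    intro i j
    rw [← hR i j, trace_fin_three]
    fin_cases i <;> fin_cases j <;> simp [hodge] <;> ring
  have htrace : N.trace = 0 := by
    have := hM.trace
    simp only [trace_fin_three, ← hricci] at this ⊢
    simp only [one_apply_eq, mul_one, add_sub_cancel_right] at this
    linarith
  have hNM : N = -M := by
    ext i j
    rw [neg_apply, ← hM.symm.apply i j, ← hricci, htrace]
    ring
  have hinner : (fun m => hodge (N m) k l) = -fun m => hodge (M m) k l := by
    ext m
    rw [hNM]
    exact congr_fun₂ (hodge_neg (M m)) k l
  rw [hRN, hinner, hodge_neg, neg_apply]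

/-- In dimension three the left-hand side is determined by its Ricci contraction `-M²`. -/
lemma IsSymmTraceFree.minor_eq {M : Matrix (Fin 3) (Fin 3) ℝ} (hM : IsSymmTraceFree M)
    (i j k l : Fin 3) :
    M i k * M j l - M i l * M j k =
      normSq M / 2 * (δ i k * δ j l - δ i l * δ j k)
        - (δ i k * (M j ⬝ᵥ M l) - δ i l * (M j ⬝ᵥ M k)
          + δ j l * (M i ⬝ᵥ M k) - δ j k * (M i ⬝ᵥ M l)) := by
  obtain ⟨a, b, c, d, e, rfl⟩ := hM.exists_eq
  fin_cases i <;> fin_cases j <;> fin_cases k <;> fin_cases l <;>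
    simp [normSq, dotProduct, Fin.sum_univ_three] <;> ring

lemma IsSymmTraceFree.mul_add_mul_eq {M : Matrix (Fin 3) (Fin 3) ℝ} (hM : IsSymmTraceFree M)
    (i j k l : Fin 3) :
    M i k * M j l + M i l * M j k = 2 * (M i j * M k l)
      + normSq M / 2 * (δ i k * δ j l + δ i l * δ j k - 2 * (δ i j * δ k l))
      - (δ i k * (M j ⬝ᵥ M l) + δ i l * (M j ⬝ᵥ M k) + δ j l * (M i ⬝ᵥ M k)
        + δ j k * (M i ⬝ᵥ M l) - 2 * (δ i j * (M k ⬝ᵥ M l)) - 2 * (δ k l * (M i ⬝ᵥ M j))) := by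
  have h₁ := hM.minor_eq i l k j
  have h₂ := hM.minor_eq i k l j
  rw [hM.symm.apply j l, hM.symm.apply k l, isSymm_one.apply j l, isSymm_one.apply k l,
    dotProduct_comm (M l), dotProduct_comm (M l)] at h₁
  rw [hM.symm.apply j k, isSymm_one.apply j k, dotProduct_comm (M k) (M j)] at h₂
  linear_combination h₁ + h₂

lemma isSymm_of_sum_hodge_eq_zero {M : Matrix (Fin 3) (Fin 3) ℝ}
    (hM : ∀ j, ∑ k, hodge (Mᵀ k) k j = 0) : M.IsSymm := by
  have h0 := hM 0
  have h1 := hM 1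
  have h2 := hM 2
  simp only [hodge, transpose_apply, of_apply, cons_val', cons_val_zero, cons_val_fin_one,
    Fin.sum_univ_three, cons_val_one, zero_add, cons_val, add_zero] at h0 h1 h2
  ext i j
  fin_cases i <;> fin_cases j <;> simp <;> linarith

lemma trace_eq_sum_hodge (M : Matrix (Fin 3) (Fin 3) ℝ) :
    M.trace = hodge (Mᵀ 2) 0 1 + hodge (Mᵀ 0) 1 2 + hodge (Mᵀ 1) 2 0 := by
  simp [hodge, trace_fin_three]
  ring

lemma energyFlux_comm_right {E B : Matrix (Fin 3) (Fin 3) ℝ} (hE : IsSymmTraceFree E)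
    (hB : IsSymmTraceFree B) (i j k : Fin 3) : energyFlux E B i j k = energyFlux E B i k j := by
  obtain ⟨a, b, c, d, e, rfl⟩ := hE.exists_eq
  obtain ⟨a', b', c', d', e', rfl⟩ := hB.exists_eq
  fin_cases i <;> fin_cases j <;> fin_cases k <;>
    simp [energyFlux, axial, mul_apply, vecMulVec_apply, Fin.sum_univ_three] <;> ring

lemma sum_hodge_mul (E B : Matrix (Fin 3) (Fin 3) ℝ) (i : Fin 3) :
    ∑ p, ∑ f, hodge (B p) i f * E p f = -axial (Bᵀ * E) i := by
  fin_cases i <;> simp [hodge, axial, mul_apply, Fin.sum_univ_three] <;> ring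

lemma sum_hodge_mul_hodge_self (B : Matrix (Fin 3) (Fin 3) ℝ) (i j : Fin 3) :
    ∑ p, ∑ f, hodge (B p) i f * hodge (B p) j f = normSq B * δ i j - Bᵀ i ⬝ᵥ Bᵀ j := by
  simp only [sum_hodge_mul_hodge, Finset.sum_sub_distrib, ← Finset.sum_mul, normSq, dotProduct,
    transpose_apply]

lemma IsSymmTraceFree.sum_hodge_mul_hodge_swap {B : Matrix (Fin 3) (Fin 3) ℝ}
    (hB : IsSymmTraceFree B) (i j : Fin 3) :
    ∑ p, ∑ f, hodge (B p) i f * hodge (B f) j p = normSq B * δ i j - 2 * (B i ⬝ᵥ B j) := by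
  obtain ⟨a, b, c, d, e, rfl⟩ := hB.exists_eq
  fin_cases i <;> fin_cases j <;>
    simp [hodge, normSq, dotProduct, Fin.sum_univ_three] <;> ring

lemma IsSymmTraceFree.sum_mul_hodge_hodge {E : Matrix (Fin 3) (Fin 3) ℝ}
    (hE : IsSymmTraceFree E) (i j : Fin 3) :
    ∑ p, ∑ f, E p f * hodge (fun m => hodge (E m) j f) i p =
      2 * (E i ⬝ᵥ E j) - normSq E * δ i j := by
  obtain ⟨a, b, c, d, e, rfl⟩ := hE.exists_eq
  fin_cases i <;> fin_cases j <;>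
    simp [hodge, normSq, dotProduct, Fin.sum_univ_three] <;> ring

lemma sum_hodge_hodge_mul_hodge_hodge (E : Matrix (Fin 3) (Fin 3) ℝ) (i j k l : Fin 3) :
    ∑ p, ∑ f, hodge (fun m => hodge (E m) k f) i p * hodge (fun m => hodge (E m) l f) j p =
      (normSq E * δ k l - Eᵀ k ⬝ᵥ Eᵀ l) * δ i j - (E i ⬝ᵥ E j * δ k l - E i k * E j l) := by
  rw [Finset.sum_comm]
  simp only [sum_hodge_mul_hodge, Finset.sum_sub_distrib, ← Finset.sum_mul, dotProduct]
  rw [Finset.sum_comm, sum_hodge_mul_hodge_self, isSymm_one.apply k l, mul_comm (E j l)]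
  rfl

lemma sum_hodge_mul_hodge_hodge {E B : Matrix (Fin 3) (Fin 3) ℝ} (hE : E.IsSymm)
    (hB : B.IsSymm) (i j k : Fin 3) :
    ∑ p, ∑ f, hodge (B p) k f * hodge (fun m => hodge (E m) j f) i p =
      δ j k * axial (B * Eᵀ) i - axial (vecMulVec (B j) (E k)) i := by
  fin_cases i <;> fin_cases j <;> fin_cases k <;>
    simp [hodge, axial, mul_apply, vecMulVec_apply, Fin.sum_univ_three, hE.apply 0 1, hE.apply 0 2,
      hE.apply 1 2, hB.apply 0 1, hB.apply 0 2, hB.apply 1 2] <;>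
    ring

lemma sum_mul_hodge (x y : Fin 3 → ℝ) (i : Fin 3) :
    ∑ p, x p * hodge y i p = axial (vecMulVec x y) i := by
  fin_cases i <;> simp [hodge, axial, vecMulVec_apply, Fin.sum_univ_three] <;> ring

lemma axial_vecMulVec_comm (x y : Fin 3 → ℝ) :
    axial (vecMulVec x y) = -axial (vecMulVec y x) := by
  ext i
  fin_cases i <;> simp [axial, vecMulVec_apply] <;> ring

end Spatial

section Symmetrization

lemma sum_perm_succ {n : ℕ} (F : Equiv.Perm (Fin (n + 1)) → ℝ) :
    ∑ σ, F σ = ∑ i, ∑ τ : Equiv.Perm (Fin n), F (Equiv.Perm.decomposeFin.symm (i, τ)) := by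
  rw [← Equiv.sum_comp Equiv.Perm.decomposeFin.symm, Fintype.sum_prod_type]

lemma sym4_eq (T : Tensor4) (a b c d : Fin 4) : sym4 T a b c d = 1 / 24 *
    (T a b c d + T a b d c + T a c b d + T a c d b + T a d b c + T a d c b
    + T b a c d + T b a d c + T b c a d + T b c d a + T b d a c + T b d c a
    + T c a b d + T c a d b + T c b a d + T c b d a + T c d a b + T c d b a
    + T d a b c + T d a c b + T d b a c + T d b c a + T d c a b + T d c b a) := by
  have h1 : (1 : Fin 4) = Fin.succ 0 := rfl
  have h2 : (2 : Fin 4) = Fin.succ (Fin.succ 0) := rfl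
  have h3 : (3 : Fin 4) = Fin.succ (Fin.succ (Fin.succ 0)) := rfl
  rw [sym4, h1, h2, h3]
  simp only [sum_perm_succ, Equiv.Perm.decomposeFin_symm_apply_zero,
    Equiv.Perm.decomposeFin_symm_apply_succ]
  simp [Fin.sum_univ_succ, Equiv.swap_apply_def]
  ring

lemma four_mul_sym4_vector (P u : Fin 4 → ℝ) (a b c d : Fin 4) :
    4 * sym4 (fun x y z w => P x * u y * u z * u w) a b c d =
      P a * u b * u c * u d + P b * u a * u c * u d + P c * u a * u b * u d
        + P d * u a * u b * u c := by
  rw [sym4_eq]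
  ring

lemma six_mul_sym4_tensor₂ {t : Fin 4 → Fin 4 → ℝ} (ht : ∀ a b, t a b = t b a) (u : Fin 4 → ℝ)
    (a b c d : Fin 4) :
    6 * sym4 (fun x y z w => t x y * u z * u w) a b c d =
      t a b * u c * u d + t a c * u b * u d + t a d * u b * u c + t b c * u a * u d
        + t b d * u a * u c + t c d * u a * u b := by
  rw [sym4_eq, ht b a, ht c a, ht d a, ht c b, ht d b, ht d c]
  ring

lemma four_mul_sym4_tensor₃ {Q : Fin 4 → Fin 4 → Fin 4 → ℝ} (h₁ : ∀ a b c, Q a b c = Q b a c)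
    (h₂ : ∀ a b c, Q a b c = Q a c b) (u : Fin 4 → ℝ) (a b c d : Fin 4) :
    4 * sym4 (fun x y z w => Q x y z * u w) a b c d =
      Q a b c * u d + Q a b d * u c + Q a c d * u b + Q b c d * u a := by
  have hsix (x y z : Fin 4) : Q x y z + Q x z y + Q y x z + Q y z x + Q z x y + Q z y x
      = 6 * Q x y z := by
    linarith [h₁ x y z, h₂ x y z, h₁ x z y, h₂ y x z, h₂ z x y]
  rw [sym4_eq]
  linear_combination (hsix a b c * u d + hsix a b d * u c + hsix a c d * u b + hsix b c d * u a) / 6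

end Symmetrization

section PairwiseSymmetry

/-- `T` is symmetric in its first two slots and under exchange of its two pairs of slots, hence
also in its last two slots. -/
structure PairwiseSymm (T : Tensor4) : Prop where
  left : ∀ a b c d, T a b c d = T b a c d
  pair : ∀ a b c d, T a b c d = T c d a b

namespace PairwiseSymm

variable {S T : Tensor4}

lemma right (hT : PairwiseSymm T) (a b c d : Fin 4) : T a b c d = T a b d c := by
  rw [hT.pair, hT.left, hT.pair]

lemma ext (hS : PairwiseSymm S) (hT : PairwiseSymm T) (h₀ : S 0 0 0 0 = T 0 0 0 0)
    (h₁ : ∀ i : Fin 3, S 0 0 0 i.succ = T 0 0 0 i.succ)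
    (h₂ : ∀ i j : Fin 3, S 0 0 i.succ j.succ = T 0 0 i.succ j.succ)
    (h₂' : ∀ i j : Fin 3, S 0 i.succ 0 j.succ = T 0 i.succ 0 j.succ)
    (h₃ : ∀ i j k : Fin 3, S 0 i.succ j.succ k.succ = T 0 i.succ j.succ k.succ)
    (h₄ : ∀ i j k l : Fin 3, S i.succ j.succ k.succ l.succ = T i.succ j.succ k.succ l.succ) :
    S = T := by
  have left {a b c d} (h : S a b c d = T a b c d) : S b a c d = T b a c d := by
    rw [hS.left, hT.left, h]
  have right {a b c d} (h : S a b c d = T a b c d) : S a b d c = T a b d c := by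
    rw [hS.right, hT.right, h]
  have pair {a b c d} (h : S a b c d = T a b c d) : S c d a b = T c d a b := by
    rw [hS.pair, hT.pair, h]
  ext a b c d
  cases a using Fin.cases <;> cases b using Fin.cases <;> cases c using Fin.cases <;>
    cases d using Fin.cases
  · exact h₀
  · exact h₁ _
  · exact right (h₁ _)
  · exact h₂ _ _
  · exact pair (h₁ _)
  · exact h₂' _ _
  · exact right (h₂' _ _)
  · exact h₃ _ _ _
  · exact left (pair (h₁ _))
  · exact left (h₂' _ _)
  · exact left (right (h₂' _ _))
  · exact left (h₃ _ _ _)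
  · exact pair (h₂ _ _)
  · exact pair (h₃ _ _ _)
  · exact pair (left (h₃ _ _ _))
  · exact h₄ _ _ _ _

end PairwiseSymm

lemma pairwiseSymm_sym4 (T : Tensor4) : PairwiseSymm (sym4 T) where
  left a b c d := by
    rw [sym4_eq, sym4_eq]
    ring
  pair a b c d := by
    rw [sym4_eq, sym4_eq]
    ring

end PairwiseSymmetry

section RestFrame

/-- The electric part of `C` seen by the observer at rest, as a spatial tensor. -/
def electric (C : Tensor4) : Matrix (Fin 3) (Fin 3) ℝ :=
  of fun i j => EW C restObserver i.succ j.succ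

/-- The magnetic part of `C` seen by the observer at rest, as a spatial tensor. -/
def magnetic (C : Tensor4) : Matrix (Fin 3) (Fin 3) ℝ :=
  of fun i j => BW C restObserver i.succ j.succ

lemma dot₁_eq_succ (x y : Fin 4 → ℝ) :
    dot₁ x y = -(x 0 * y 0) + ∑ i : Fin 3, x i.succ * y i.succ := by
  simp only [dot₁, Fin.sum_univ_succ (n := 3), signature_zero, signature_succ, neg_one_mul, one_mul]

lemma dot₂_eq_succ (X Y : Fin 4 → Fin 4 → ℝ) :
    dot₂ X Y = X 0 0 * Y 0 0 - ∑ j : Fin 3, X 0 j.succ * Y 0 j.succ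
      - ∑ i : Fin 3, X i.succ 0 * Y i.succ 0
      + ∑ i : Fin 3, ∑ j : Fin 3, X i.succ j.succ * Y i.succ j.succ := by
  simp only [dot₂, Fin.sum_univ_succ (n := 3), signature_zero, signature_succ, dot₁_eq_succ,
    one_mul, Finset.sum_add_distrib, Finset.sum_neg_distrib]
  ring

lemma EW_restObserver (C : Tensor4) (a c : Fin 4) : EW C restObserver a c = C a 0 c 0 := by
  simp [EW, restObserver, Fin.sum_univ_succ]

lemma electric_apply (C : Tensor4) (i j : Fin 3) : electric C i j = C i.succ 0 j.succ 0 :=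
  EW_restObserver C _ _

lemma BW_restObserver (C : Tensor4) (a c : Fin 4) :
    BW C restObserver a c = dualL C a 0 c 0 := by
  simp [BW, restObserver, Fin.sum_univ_succ]

lemma lo_restObserver_zero : lo restObserver 0 = -1 := by
  simp [lo, gm, restObserver]

lemma lo_restObserver_succ (i : Fin 3) : lo restObserver i.succ = 0 := by
  simp [lo, gm, restObserver]

lemma gm_zero_zero : gm 0 0 = -1 := rfl

lemma gm_zero_succ (i : Fin 3) : gm 0 i.succ = 0 := by
  simp [gm, (Fin.succ_ne_zero i).symm]

lemma gm_succ_succ (i j : Fin 3) : gm i.succ j.succ = δ i j := by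
  simp [gm, one_apply]

lemma hm_restObserver_zero (a : Fin 4) : hm restObserver 0 a = 0 := by
  cases a using Fin.cases <;>
    simp [hm, gm_zero_zero, gm_zero_succ, lo_restObserver_zero, lo_restObserver_succ]

lemma hm_restObserver_succ (i j : Fin 3) : hm restObserver i.succ j.succ = δ i j := by
  simp [hm, gm_succ_succ, lo_restObserver_succ]

lemma eps_restObserver (a b c : Fin 4) : eps restObserver a b c = eta 0 a b c := by
  simp [eps, restObserver, Fin.sum_univ_succ]

lemma dot₂_eps_restObserver_zero (X : Fin 4 → Fin 4 → ℝ) :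
    dot₂ X (eps restObserver 0) = 0 := by
  simp [dot₂, dot₁, eps_restObserver, eta]

lemma dot₂_eps_restObserver_succ (X : Fin 4 → Fin 4 → ℝ) (i : Fin 3) :
    dot₂ X (eps restObserver i.succ) = axial (fun j k => X j.succ k.succ) i := by
  fin_cases i <;> simp [dot₂_eq_succ, eps_restObserver, eta, axial, Fin.sum_univ_three,
    show Int.sign 2 = 1 from rfl, show Int.sign 3 = 1 from rfl] <;> ring

lemma dot₂_eta_succ_zero (X : Fin 4 → Fin 4 → ℝ) (i : Fin 3) :
    dot₂ (eta i.succ 0) X = -axial (fun j k => X j.succ k.succ) i := by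
  fin_cases i <;> simp [dot₂_eq_succ, eta, axial, Fin.sum_univ_three,
    show Int.sign 2 = 1 from rfl, show Int.sign 3 = 1 from rfl] <;> ring

lemma magnetic_apply (C : Tensor4) (i j : Fin 3) :
    magnetic C i j = -axial (fun k l => C k.succ l.succ j.succ 0) i / 2 := by
  refine (BW_restObserver C _ _).trans ?_
  rw [dualL_eq_dot₂, dot₂_eta_succ_zero]
  ring

lemma BW_restObserver_zero_left (C : Tensor4) (c : Fin 4) : BW C restObserver 0 c = 0 := by
  have heta (p q : Fin 4) : eta 0 0 p q = 0 := by simp [eta]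
  simp only [BW_restObserver, dualL_eq_dot₂, dot₂, dot₁, heta, zero_mul, mul_zero,
    Finset.sum_const_zero]

lemma Pse_restObserver_zero (C : Tensor4) : Pse C restObserver 0 = 0 := by
  rw [Pse_eq_dot₂, dot₂_eps_restObserver_zero, mul_zero]

lemma Qse_comm (C : Tensor4) (n : Fin 4 → ℝ) (c d b : Fin 4) : Qse C n c d b = Qse C n d c b := by
  rw [Qse_eq_dot₂, Qse_eq_dot₂, hm_comm]
  ring

lemma Qse_restObserver_zero_right (C : Tensor4) (c d : Fin 4) : Qse C restObserver c d 0 = 0 := by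
  rw [Qse_eq_dot₂, Pse_restObserver_zero, dot₂_eps_restObserver_zero, dot₂_eps_restObserver_zero]
  ring

section WeylTensor

variable {C : Tensor4} (hC : WeylSymm C)
include hC

lemma weylSymm_self_left (a c d : Fin 4) : C a a c d = 0 := by
  linarith [hC.antisymm₁ a a c d]

lemma weylSymm_self_right (a b c : Fin 4) : C a b c c = 0 := by
  linarith [hC.antisymm₂ a b c c]

lemma EW_restObserver_zero_left (c : Fin 4) : EW C restObserver 0 c = 0 := by
  rw [EW_restObserver, weylSymm_self_left hC]

lemma EW_restObserver_zero_right (a : Fin 4) : EW C restObserver a 0 = 0 := by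
  rw [EW_restObserver, weylSymm_self_right hC]

lemma BW_restObserver_zero_right (a : Fin 4) : BW C restObserver a 0 = 0 := by
  simp only [BW_restObserver, dualL_eq_dot₂, weylSymm_self_right hC, dot₂, dot₁, mul_zero,
    Finset.sum_const_zero]

lemma sum_weylSymm_succ_succ (b d : Fin 4) : ∑ k : Fin 3, C k.succ b k.succ d = C 0 b 0 d := by
  have h := hC.traceFree b d
  simp only [gm_eq_ite, ite_mul, zero_mul, Finset.sum_ite_eq, Finset.mem_univ, if_true] at h
  simp only [Fin.sum_univ_succ (n := 3), signature_zero, signature_succ, one_mul] at h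
  linarith

lemma isSymmTraceFree_electric : IsSymmTraceFree (electric C) where
  symm := by
    ext i j
    exact (EW_restObserver C _ _).trans ((hC.pairSymm _ _ _ _).trans (EW_restObserver C _ _).symm)
  trace := by
    simp only [trace, diag, electric_apply, sum_weylSymm_succ_succ hC,
      weylSymm_self_left hC]

lemma weylSymm_succ_succ_succ_zero (j k l : Fin 3) :
    C k.succ l.succ j.succ 0 = -hodge ((magnetic C)ᵀ j) k l := by
  set X : Matrix (Fin 3) (Fin 3) ℝ := fun k l => C k.succ l.succ j.succ 0
  have hX (k l : Fin 3) : X k l = -X l k := hC.antisymm₁ _ _ _ _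
  have hvec : ![X 1 2, X 2 0, X 0 1] = -(magnetic C)ᵀ j := by
    ext i
    have haxial : axial X i = 2 * ![X 1 2, X 2 0, X 0 1] i := by
      fin_cases i <;> simp [axial] <;> linarith [hX 1 2, hX 2 0, hX 0 1]
    rw [Pi.neg_apply, transpose_apply, magnetic_apply, haxial]
    ring
  calc X k l = hodge ![X 1 2, X 2 0, X 0 1] k l := congr_fun₂ (eq_hodge_of_antisymm hX) k l
    _ = -hodge ((magnetic C)ᵀ j) k l := by rw [hvec, hodge_neg, neg_apply]

lemma isSymmTraceFree_magnetic : IsSymmTraceFree (magnetic C) where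
  symm := by
    refine isSymm_of_sum_hodge_eq_zero fun j => ?_
    simpa only [weylSymm_succ_succ_succ_zero hC, weylSymm_self_right hC, Finset.sum_neg_distrib,
      neg_eq_zero] using sum_weylSymm_succ_succ hC j.succ 0
  trace := by
    have hcyclic (a b c d : Fin 4) : C a b c d + C b c a d + C c a b d = 0 := by
      linarith [hC.firstBianchi a b c d, hC.antisymm₁ b a c d, hC.antisymm₁ a c b d,
        hC.antisymm₁ c b a d]
    have h := hcyclic (Fin.succ 0) (Fin.succ 1) (Fin.succ 2) 0
    simp only [weylSymm_succ_succ_succ_zero hC] at h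
    rw [trace_eq_sum_hodge]
    linarith

lemma EW_restObserver_comm (a c : Fin 4) : EW C restObserver a c = EW C restObserver c a := by
  rw [EW_restObserver, EW_restObserver, hC.pairSymm]

lemma BW_restObserver_comm (a c : Fin 4) : BW C restObserver a c = BW C restObserver c a := by
  cases a using Fin.cases with
  | zero => rw [BW_restObserver_zero_left, BW_restObserver_zero_right hC]
  | succ i =>
  cases c using Fin.cases with
  | zero => rw [BW_restObserver_zero_left, BW_restObserver_zero_right hC]
  | succ j => exact (isSymmTraceFree_magnetic hC).symm.apply j i

lemma weylSymm_zero_succ_succ_succ (i j k : Fin 3) :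
    C 0 i.succ j.succ k.succ = hodge (magnetic C i) j k := by
  rw [hC.pairSymm, hC.antisymm₂, weylSymm_succ_succ_succ_zero hC,
    (isSymmTraceFree_magnetic hC).symm, neg_neg]

lemma weylSymm_succ_succ_zero_succ (i j k : Fin 3) :
    C j.succ k.succ 0 i.succ = hodge (magnetic C i) j k := by
  rw [hC.pairSymm, weylSymm_zero_succ_succ_succ hC]

lemma weylSymm_succ_zero_succ_succ (i j k : Fin 3) :
    C i.succ 0 j.succ k.succ = -hodge (magnetic C i) j k := by
  rw [hC.antisymm₁, weylSymm_zero_succ_succ_succ hC]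

lemma weylSymm_spatial (i j k l : Fin 3) :
    C i.succ j.succ k.succ l.succ = -hodge (fun m => hodge (electric C m) k l) i j := by
  refine eq_neg_hodge_hodge_of_ricci (R := fun i j k l => C i.succ j.succ k.succ l.succ)
    (fun _ _ _ _ => hC.antisymm₁ _ _ _ _) (fun _ _ _ _ => hC.antisymm₂ _ _ _ _)
    (isSymmTraceFree_electric hC) (fun i j => ?_) i j k l
  rw [sum_weylSymm_succ_succ hC, electric_apply, hC.antisymm₁, hC.antisymm₂,
    neg_neg]

lemma dot₁_EW_restObserver (i j : Fin 3) :
    dot₁ (EW C restObserver i.succ) (EW C restObserver j.succ) = electric C i ⬝ᵥ electric C j := by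
  rw [dot₁_eq_succ, EW_restObserver_zero_right hC, zero_mul, neg_zero, zero_add]
  rfl

lemma dot₁_BW_restObserver (i j : Fin 3) :
    dot₁ (BW C restObserver i.succ) (BW C restObserver j.succ) = magnetic C i ⬝ᵥ magnetic C j := by
  rw [dot₁_eq_succ, BW_restObserver_zero_right hC, zero_mul, neg_zero, zero_add]
  rfl

lemma Wse_restObserver : Wse C restObserver = normSq (electric C) + normSq (magnetic C) := by
  simp only [Wse_eq_dot₂, dot₂_eq_succ, EW_restObserver_zero_left hC,
    EW_restObserver_zero_right hC, BW_restObserver_zero_left, BW_restObserver_zero_right hC,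
    mul_zero, Finset.sum_const_zero, sub_self, zero_add]
  rfl

lemma Pse_restObserver_succ (i : Fin 3) :
    Pse C restObserver i.succ = 2 * axial (magnetic C * (electric C)ᵀ) i := by
  rw [Pse_eq_dot₂, dot₂_eps_restObserver_succ]
  simp only [dot₁_eq_succ, BW_restObserver_zero_right hC, zero_mul, neg_zero, zero_add]
  rfl

lemma tse_restObserver_zero (b : Fin 4) : tse C restObserver 0 b = 0 := by
  simp [tse_eq_dot₁, dot₁, hm_restObserver_zero, BW_restObserver_zero_left,
    EW_restObserver_zero_left hC]

lemma tse_restObserver_succ (i j : Fin 3) :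
    tse C restObserver i.succ j.succ = (normSq (electric C) + normSq (magnetic C)) * δ i j
      - 2 * (magnetic C i ⬝ᵥ magnetic C j + electric C i ⬝ᵥ electric C j) := by
  rw [tse_eq_dot₁, Wse_restObserver hC, hm_restObserver_succ, dot₁_BW_restObserver hC,
    dot₁_EW_restObserver hC]

lemma Qse_restObserver_zero_left (d b : Fin 4) : Qse C restObserver 0 d b = 0 := by
  simp [Qse_eq_dot₂, dot₂, dot₁, hm_restObserver_zero, BW_restObserver_zero_left,
    EW_restObserver_zero_left hC]

lemma Qse_restObserver_zero_mid (c b : Fin 4) : Qse C restObserver c 0 b = 0 := by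
  rw [Qse_comm, Qse_restObserver_zero_left hC]

lemma Qse_restObserver_succ (i j k : Fin 3) :
    Qse C restObserver i.succ j.succ k.succ = energyFlux (electric C) (magnetic C) i j k := by
  rw [Qse_eq_dot₂, hm_restObserver_succ, Pse_restObserver_succ hC, dot₂_eps_restObserver_succ,
    dot₂_eps_restObserver_succ]
  change _ - 2 * (axial (vecMulVec (magnetic C j) (electric C i)) k
      + axial (vecMulVec (magnetic C i) (electric C j)) k) = _
  rw [energyFlux]
  ring

lemma Qse_restObserver_comm_right (a b c : Fin 4) :
    Qse C restObserver a b c = Qse C restObserver a c b := by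
  have hleft := Qse_restObserver_zero_left hC
  have hmid := Qse_restObserver_zero_mid hC
  have hright := Qse_restObserver_zero_right C
  cases a using Fin.cases with
  | zero => rw [hleft, hleft]
  | succ i =>
  cases b using Fin.cases with
  | zero => rw [hmid, hright]
  | succ j =>
  cases c using Fin.cases with
  | zero => rw [hmid, hright]
  | succ k =>
  rw [Qse_restObserver_succ hC, Qse_restObserver_succ hC,
    energyFlux_comm_right (isSymmTraceFree_electric hC) (isSymmTraceFree_magnetic hC)]

lemma weylSymm_zero_succ_succ_zero (i j : Fin 3) : C 0 i.succ j.succ 0 = -electric C i j := by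
  rw [hC.antisymm₁, ← electric_apply C]

lemma weylSymm_succ_zero_zero_succ (i j : Fin 3) : C i.succ 0 0 j.succ = -electric C i j := by
  rw [hC.antisymm₂, ← electric_apply C]

lemma weylSymm_zero_succ_zero_succ (i j : Fin 3) : C 0 i.succ 0 j.succ = electric C i j := by
  rw [hC.antisymm₁, weylSymm_succ_zero_zero_succ hC, neg_neg]

lemma belSquare_zero_zero_zero_zero : belSquare C 0 0 0 0 = normSq (electric C) := by
  simp only [belSquare, dot₂_eq_succ, weylSymm_self_left hC, weylSymm_self_right hC,
    weylSymm_zero_succ_zero_succ hC]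
  simp [normSq, dotProduct]

lemma belSquare_zero_zero_zero_succ (i : Fin 3) :
    belSquare C 0 0 0 i.succ = -axial (magnetic C * (electric C)ᵀ) i := by
  simp only [belSquare, dot₂_eq_succ, weylSymm_self_left hC, weylSymm_self_right hC,
    weylSymm_zero_succ_zero_succ hC, weylSymm_zero_succ_succ_succ hC, sum_hodge_mul,
    (isSymmTraceFree_electric hC).symm.eq, (isSymmTraceFree_magnetic hC).symm.eq]
  simp

lemma belSquare_zero_zero_succ_succ (i j : Fin 3) :
    belSquare C 0 0 i.succ j.succ = normSq (magnetic C) * δ i j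
      - magnetic C i ⬝ᵥ magnetic C j - electric C i ⬝ᵥ electric C j := by
  simp only [belSquare, dot₂_eq_succ, weylSymm_self_left hC, weylSymm_zero_succ_succ_succ hC,
    weylSymm_zero_succ_succ_zero hC, sum_hodge_mul_hodge_self, neg_mul_neg,
    (isSymmTraceFree_magnetic hC).symm.eq,
    sum_mul_eq_dotProduct_of_isSymm (isSymmTraceFree_electric hC).symm,
    isSymm_one.apply i j, dotProduct_comm (magnetic C j), dotProduct_comm (electric C j)]
  simp only [mul_zero, Finset.sum_const_zero, sub_self, zero_sub]
  ring

lemma belSquare_zero_succ_zero_succ (i j : Fin 3) :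
    belSquare C 0 i.succ 0 j.succ = normSq (magnetic C) * δ i j
      - 2 * (magnetic C i ⬝ᵥ magnetic C j) := by
  simp only [belSquare, dot₂_eq_succ, weylSymm_self_left hC, weylSymm_self_right hC,
    weylSymm_succ_succ_zero_succ hC, weylSymm_zero_succ_succ_succ hC,
    (isSymmTraceFree_magnetic hC).sum_hodge_mul_hodge_swap, isSymm_one.apply i j,
    dotProduct_comm (magnetic C j)]
  simp

lemma belSquare_zero_succ_succ_zero (i j : Fin 3) :
    belSquare C 0 i.succ j.succ 0 = normSq (electric C) * δ i j
      - 2 * (electric C i ⬝ᵥ electric C j) := by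
  simp only [belSquare, dot₂_eq_succ, weylSymm_self_left hC, weylSymm_self_right hC,
    weylSymm_spatial hC, weylSymm_zero_succ_zero_succ hC, mul_neg, Finset.sum_neg_distrib,
    (isSymmTraceFree_electric hC).sum_mul_hodge_hodge]
  simp

lemma belSquare_zero_succ_succ_succ (i j k : Fin 3) :
    belSquare C 0 i.succ j.succ k.succ =
      2 * axial (vecMulVec (magnetic C j) (electric C k)) i
        - δ j k * axial (magnetic C * (electric C)ᵀ) i := by
  have hEB : ∑ p, electric C p k * hodge (magnetic C j) i p =
      -axial (vecMulVec (magnetic C j) (electric C k)) i := by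
    simp only [(isSymmTraceFree_electric hC).symm.apply k]
    rw [sum_mul_hodge, axial_vecMulVec_comm, Pi.neg_apply]
  simp only [belSquare, dot₂_eq_succ, weylSymm_self_left hC, weylSymm_spatial hC,
    weylSymm_zero_succ_succ_zero hC, weylSymm_succ_succ_succ_zero hC,
    weylSymm_zero_succ_succ_succ hC, (isSymmTraceFree_magnetic hC).symm.eq, neg_mul, mul_neg,
    neg_neg, Finset.sum_neg_distrib, hEB,
    sum_hodge_mul_hodge_hodge (isSymmTraceFree_electric hC).symm
      (isSymmTraceFree_magnetic hC).symm]
  simp only [zero_mul, Finset.sum_const_zero, sub_neg_eq_add]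
  ring

lemma belSquare_succ_succ_succ_succ (i j k l : Fin 3) :
    belSquare C i.succ j.succ k.succ l.succ =
      2 * electric C i l * electric C j k + 2 * magnetic C i k * magnetic C j l
      - δ k l * (electric C i ⬝ᵥ electric C j + magnetic C i ⬝ᵥ magnetic C j)
      - δ i j * (electric C k ⬝ᵥ electric C l + magnetic C k ⬝ᵥ magnetic C l)
      + δ i j * δ k l * normSq (electric C) := by
  have hE := isSymmTraceFree_electric hC
  have hB := isSymmTraceFree_magnetic hC
  simp only [belSquare, dot₂_eq_succ, ← electric_apply C, weylSymm_spatial hC,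
    weylSymm_succ_zero_succ_succ hC, weylSymm_succ_succ_succ_zero hC, neg_mul_neg, hE.symm.eq,
    hB.symm.eq, sum_hodge_mul_hodge, sum_hodge_hodge_mul_hodge_hodge, hB.symm.apply i,
    hB.symm.apply j, isSymm_one.apply k l, dotProduct_comm (electric C l),
    dotProduct_comm (magnetic C l)]
  ring

lemma belSquare_reverse (a b c d : Fin 4) : belSquare C a b c d = belSquare C d c b a := by
  rw [belSquare, dot₂_swap, belSquare]
  simp only [hC.pairSymm d, hC.pairSymm c]

lemma q4_self_eq_normSq : q4 C C = 8 * (normSq (electric C) - normSq (magnetic C)) := by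
  have hmixed (i : Fin 3) : belSquare C i.succ i.succ 0 0 = belSquare C 0 0 i.succ i.succ :=
    belSquare_reverse hC _ _ _ _
  rw [q4_self_eq_sum_belSquare]
  simp only [Fin.sum_univ_succ (n := 3), hmixed, belSquare_zero_zero_zero_zero hC,
    belSquare_zero_zero_succ_succ hC, belSquare_succ_succ_succ_succ hC]
  simp [signature, normSq, dotProduct, Fin.sum_univ_three]
  ring

lemma pairwiseSymm_tse4_restObserver : PairwiseSymm (tse4 C restObserver) where
  left a b c d := by
    rw [tse4, tse4, EW_restObserver_comm hC b a, BW_restObserver_comm hC b a, tse_comm C _ b a,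
      hm_comm _ b a, hm_comm _ d b, hm_comm _ c b, hm_comm _ d a, hm_comm _ c a]
    ring
  pair a b c d := by
    rw [tse4, tse4, hm_comm _ d b, hm_comm _ c b, hm_comm _ d a, hm_comm _ c a,
      tse_comm C _ a c, tse_comm C _ b c, tse_comm C _ a d, tse_comm C _ b d, hm_comm _ b d,
      hm_comm _ a d]
    ring

lemma pairwiseSymm_splitting_restObserver : PairwiseSymm (splitting C restObserver) where
  left a b c d := by
    simp only [splitting, (pairwiseSymm_sym4 _).left a b,
      (pairwiseSymm_tse4_restObserver hC).left a b]
    ring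
  pair a b c d := by
    simp only [splitting, (pairwiseSymm_sym4 _).pair a b,
      (pairwiseSymm_tse4_restObserver hC).pair a b]
    ring

lemma pairwiseSymm_BR : PairwiseSymm (BR C) where
  left a b c d := by
    rw [BR_eq_belSquare, BR_eq_belSquare, belSquare_swap C b a, belSquare_swap C b a, gm_comm b a]
    ring
  pair a b c d := by
    rw [BR_eq_belSquare, BR_eq_belSquare, belSquare_reverse hC c d b a,
      belSquare_swap C c d a b, belSquare_reverse hC d c b a]
    ring

lemma BR_zero_zero_zero_zero : BR C 0 0 0 0 = Wse C restObserver := by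
  rw [BR_eq_belSquare, belSquare_zero_zero_zero_zero hC, q4_self_eq_normSq hC, gm_zero_zero,
    Wse_restObserver hC]
  ring

lemma BR_zero_zero_zero_succ (i : Fin 3) : BR C 0 0 0 i.succ = -Pse C restObserver i.succ := by
  rw [BR_eq_belSquare, belSquare_swap C 0 0 i.succ, belSquare_zero_zero_zero_succ hC, gm_zero_succ,
    Pse_restObserver_succ hC]
  ring

lemma BR_zero_zero_succ_succ (i j : Fin 3) :
    BR C 0 0 i.succ j.succ = tse C restObserver i.succ j.succ := by
  rw [BR_eq_belSquare, belSquare_swap C 0 0 j.succ, belSquare_zero_zero_succ_succ hC,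
    q4_self_eq_normSq hC, gm_zero_zero, gm_succ_succ, tse_restObserver_succ hC]
  ring

lemma BR_zero_succ_zero_succ (i j : Fin 3) :
    BR C 0 i.succ 0 j.succ = tse C restObserver i.succ j.succ := by
  rw [BR_eq_belSquare, belSquare_zero_succ_zero_succ hC, belSquare_zero_succ_succ_zero hC,
    gm_zero_succ, tse_restObserver_succ hC]
  ring

lemma BR_zero_succ_succ_succ (i j k : Fin 3) :
    BR C 0 i.succ j.succ k.succ = -Qse C restObserver i.succ j.succ k.succ := by
  rw [BR_eq_belSquare, belSquare_zero_succ_succ_succ hC, belSquare_zero_succ_succ_succ hC,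
    gm_zero_succ, Qse_comm, Qse_restObserver_comm_right hC, Qse_restObserver_succ hC, energyFlux,
    isSymm_one.apply j k]
  ring

lemma BR_succ_succ_succ_succ (i j k l : Fin 3) :
    BR C i.succ j.succ k.succ l.succ = tse4 C restObserver i.succ j.succ k.succ l.succ := by
  have hEW (i j : Fin 3) : EW C restObserver i.succ j.succ = electric C i j := rfl
  have hBW (i j : Fin 3) : BW C restObserver i.succ j.succ = magnetic C i j := rfl
  rw [BR_eq_belSquare, q4_self_eq_normSq hC, tse4]
  simp only [belSquare_succ_succ_succ_succ hC, gm_succ_succ, tse_restObserver_succ hC,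
    hm_restObserver_succ, hEW, hBW, Wse_restObserver hC]
  rw [isSymm_one.apply i k, isSymm_one.apply i l, isSymm_one.apply j k, isSymm_one.apply j l,
    isSymm_one.apply k l]
  simp only [dotProduct_comm (electric C k) (electric C i),
    dotProduct_comm (electric C l) (electric C i), dotProduct_comm (electric C k) (electric C j),
    dotProduct_comm (electric C l) (electric C j), dotProduct_comm (electric C l) (electric C k),
    dotProduct_comm (magnetic C k) (magnetic C i), dotProduct_comm (magnetic C l) (magnetic C i),
    dotProduct_comm (magnetic C k) (magnetic C j), dotProduct_comm (magnetic C l) (magnetic C j),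
    dotProduct_comm (magnetic C l) (magnetic C k)]
  linear_combination 2 * (isSymmTraceFree_electric hC).mul_add_mul_eq i j k l
    + 2 * (isSymmTraceFree_magnetic hC).mul_add_mul_eq i j k l

lemma splitting_restObserver (a b c d : Fin 4) :
    splitting C restObserver a b c d =
      Wse C restObserver * lo restObserver a * lo restObserver b * lo restObserver c
        * lo restObserver d
      + (Pse C restObserver a * lo restObserver b * lo restObserver c * lo restObserver d
        + Pse C restObserver b * lo restObserver a * lo restObserver c * lo restObserver d
        + Pse C restObserver c * lo restObserver a * lo restObserver b * lo restObserver d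
        + Pse C restObserver d * lo restObserver a * lo restObserver b * lo restObserver c)
      + (tse C restObserver a b * lo restObserver c * lo restObserver d
        + tse C restObserver a c * lo restObserver b * lo restObserver d
        + tse C restObserver a d * lo restObserver b * lo restObserver c
        + tse C restObserver b c * lo restObserver a * lo restObserver d
        + tse C restObserver b d * lo restObserver a * lo restObserver c
        + tse C restObserver c d * lo restObserver a * lo restObserver b)
      + (Qse C restObserver a b c * lo restObserver d + Qse C restObserver a b d * lo restObserver c
        + Qse C restObserver a c d * lo restObserver b
        + Qse C restObserver b c d * lo restObserver a)
      + tse4 C restObserver a b c d := by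
  rw [splitting, four_mul_sym4_vector, six_mul_sym4_tensor₂ (tse_comm C _),
    four_mul_sym4_tensor₃ (Qse_comm C _) (Qse_restObserver_comm_right hC)]

lemma tse4_restObserver_zero (b c d : Fin 4) : tse4 C restObserver 0 b c d = 0 := by
  simp only [tse4, hm_restObserver_zero, tse_restObserver_zero hC,
    tse_comm C _ _ 0, EW_restObserver_zero_left hC, BW_restObserver_zero_left]
  ring

theorem BR_eq_splitting_restObserver : BR C = splitting C restObserver := by
  refine (pairwiseSymm_BR hC).ext (pairwiseSymm_splitting_restObserver hC) ?_ ?_ ?_ ?_ ?_ ?_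
  all_goals
    intros
    simp only [splitting_restObserver hC, lo_restObserver_zero, lo_restObserver_succ,
      tse4_restObserver_zero hC, tse_restObserver_zero hC, Pse_restObserver_zero,
      Qse_restObserver_zero_left hC, Qse_restObserver_zero_mid hC, BR_zero_zero_zero_zero hC,
      BR_zero_zero_zero_succ hC, BR_zero_zero_succ_succ hC, BR_zero_succ_zero_succ hC,
      BR_zero_succ_succ_succ hC, BR_succ_succ_succ_succ hC]
    ring

end WeylTensor

end RestFrame

end BelRobinson

/-- Orthogonal splitting of the Bel-Robinson tensor:
`T_{abcd} = W n_a n_b n_c n_d + 4 𝒫_{(a} n_b n_c n_{d)} + 6 t_{(ab} n_c n_{d)}`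
`+ 4 Q_{(abc} n_{d)} + t_{abcd}`. -/
theorem bel_robinson_orthogonal_splitting
    (C : Tensor4) (hC : WeylSymm C)
    (n : Fin 4 → ℝ) (hn : (∑ a, ∑ b, gm a b * n a * n b) = -1) :
    ∀ a b c d : Fin 4,
      BR C a b c d =
        Wse C n * lo n a * lo n b * lo n c * lo n d
        + 4 * sym4 (fun x y z w => Pse C n x * lo n y * lo n z * lo n w) a b c d
        + 6 * sym4 (fun x y z w => tse C n x y * lo n z * lo n w) a b c d
        + 4 * sym4 (fun x y z w => Qse C n x y z * lo n w) a b c d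
        + tse4 C n a b c d := by
  have hn' : BelRobinson.dot₁ n n = -1 := (BelRobinson.sum_gm_mul_eq_dot₁ n n).symm.trans hn
  obtain ⟨L, hL, rfl⟩ := BelRobinson.exists_isProperLorentz_mulVec_restObserver hn'
  have h : BR C = BelRobinson.splitting C (L.mulVec BelRobinson.restObserver) :=
    BelRobinson.pull₄_injective hL.isUnit <| by
      rw [hL.pull₄_BR, hL.pull₄_splitting,
        BelRobinson.BR_eq_splitting_restObserver (hL.weylSymm_pull₄ hC)]
  exact fun a b c d => congr_fun₂ (congr_fun₂ h a b) c d
end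
end
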